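/- Let k be a field of characteristic 0, let A and B be polynomial rings over k in disjoint sets of variables, R = A ⊗_k B, and let I ⊆ A and J ⊆ B be nonzero proper homogeneous ideals. Then for all n ≥ 1: depth R/(I+J)^{(n)} = min over i ∈ [1, n−1] and j ∈ [1, n] of { depth A/I^{(n−i)} + depth B/J^{(i)} + 1, depth A/I^{(n−j+1)} + depth B/J^{(j)} }. -/

import Mathlib

open MvPolynomial TensorProduct

/-- The `n`-th symbolic power of an ideal `Q`:
`Q^{(n)} = ⋂_{P ∈ Min(Q)} (Q^n R_P ∩ R)`, the intersection over the minimal primes `P` of `Q`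
of the contractions of `Q^n R_P` along the localization maps `R → R_P`. -/
noncomputable def symbPow {R : Type*} [CommRing R] (Q : Ideal R) (n : ℕ) : Ideal R :=
  ⨅ (P : Ideal R) (hP : P ∈ Q.minimalPrimes),
    letI : P.IsPrime := hP.1.1
    Ideal.comap (algebraMap R (Localization.AtPrime P))
      (Ideal.map (algebraMap R (Localization.AtPrime P)) (Q ^ n))

/-- The depth of a module `M` with respect to an ideal `m`: the maximal length of an
`M`-regular sequence contained in `m`. -/
noncomputable def idealDepth {R : Type*} [CommRing R] (m : Ideal R)
    (M : Type*) [AddCommGroup M] [Module R M] : ℕ :=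
  sSup {n | ∃ rs : List R, rs.length = n ∧ (∀ r ∈ rs, r ∈ m) ∧
    RingTheory.Sequence.IsRegular M rs}

/-- The maximal homogeneous ideal of a polynomial ring, generated by the variables. -/
noncomputable def maxHomIdeal (k : Type*) [CommSemiring k] (σ : Type*) :
    Ideal (MvPolynomial σ k) :=
  Ideal.span (Set.range X)

/-- An ideal of a polynomial ring is homogeneous if it contains all homogeneous components of
each of its elements. -/
def IsHomogeneousIdeal {k σ : Type*} [CommSemiring k] (I : Ideal (MvPolynomial σ k)) : Prop :=
  ∀ f ∈ I, ∀ d : ℕ, homogeneousComponent d f ∈ I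

/-- A monomial ideal: an ideal generated by monomials. -/
def IsMonomialIdeal {k σ : Type*} [CommSemiring k] (I : Ideal (MvPolynomial σ k)) : Prop :=
  ∃ S : Set (σ →₀ ℕ), I = Ideal.span ((fun s => monomial s (1 : k)) '' S)

set_option linter.unusedSectionVars false

/-! Write `a_i = I^{(i)}R` and `b_j = J^{(j)}R`. Two facts carry the proof.

**Binomial theorem** (`TP.symbPow_sup`): `(I + J)^{(n)} = ∑_{i=0}^n a_{n-i} b_i`. In characteristic
zero the ideal `PR + P'R` is radical for prime ideals `P`, `P'` of the two factors, since the tensor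
product of two domains of finite type over `k` is reduced (`TP.isRadical`). It follows that an
element `w` outside the minimal primes of `IR + JR` is a nonzerodivisor modulo `PR + P'R` whenever
`P` and `P'` are minimal over `I` and `J`, and then, by filtering `A / I^{(i)}` and `B / J^{(j)}`
with factors torsion-free over the `A / P` and `B / P'` (`TP.filtration`), modulo every `a_i + b_j`.
Since `(I + J)^n ⊆ a_i + b_j` for `i + j = n + 1`, the ideal `(I + J)^{(n)}` is contained in the
intersection of these sums; the identity `a_i ∩ b_j = a_i b_j` turns this intersection into
`∑ a_{n-i} b_i` (`mem_partSum_sup`).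

**Vanishing of maps in Koszul homology** (`HZero_symbPow_mul`): the inclusion
`a_{i+1} b_j ⊆ a_i b_j` induces the zero map on the Koszul homology of the variables, that is on
`Tor(k, -)`. Partial derivatives send `I^{(i+1)}` into `I^{(i)}`, so the de Rham differential in the
variables of `A` maps Koszul chains in `a_{i+1} b_j` to chains in `a_i b_j`; by Cartan's formula its
anticommutator with the Koszul differential multiplies each multigraded piece by its weight, which
is positive, hence invertible in characteristic zero (`deRham_exact`).

Let `P_t = ∑_{i ≤ t} a_{n-i} b_i`. Then `P_{t-1} ∩ a_{n-t} b_t = a_{n-t+1} b_t`, and by the vanishing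
result the long exact Koszul homology sequence of `P_t = P_{t-1} + a_{n-t} b_t` splits into short
exact sequences (`PD.sup`). So the projective dimension of `P_n` is the maximum of
`pd a_{n-i} b_i` and `pd a_{n-i+1} b_i + 1`. The projective dimension of `a_i ∩ b_j` is the sum of
those of `I^{(i)}` and `J^{(j)}` (`PD.incl_inf_incr`), and the Auslander–Buchsbaum formula, here the
depth sensitivity of the Koszul complex (`PD.add_depth`), translates the result into depths.
-/

/-! ### The Koszul complex: signs and homotopies -/

section Koszul

variable {ι : Type*} [LinearOrder ι]

/-- The sign of `e_i ∧ e_s`: `-1` to the number of elements of `s` below `i`. -/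
def ksgn (i : ι) (s : Finset ι) : ℤ := ∏ l ∈ s, if l < i then -1 else 1

lemma ksgn_insert {i j : ι} {s : Finset ι} (h : j ∉ s) :
    ksgn i (insert j s) = (if j < i then -1 else 1) * ksgn i s := by
  rw [ksgn, Finset.prod_insert h, ksgn]

lemma ksgn_erase {i j : ι} {s : Finset ι} (h : j ∈ s) :
    ksgn i (s.erase j) = (if j < i then -1 else 1) * ksgn i s := by
  rw [ksgn, ksgn, ← Finset.mul_prod_erase s _ h, ← mul_assoc]
  split_ifs <;> simp

lemma ksgn_mul_self (i : ι) (s : Finset ι) : ksgn i s * ksgn i s = 1 := by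
  rw [ksgn, ← Finset.prod_mul_distrib]
  exact Finset.prod_eq_one fun l _ => by split_ifs <;> simp

variable [Fintype ι] {M : Type*} [AddCommGroup M]

/-- The operator `∑ᵢ A i ⊗ (contraction with e_i^*)` on `M ⊗ ⋀ ℤ^ι`, whose elements are encoded as
functions `f : Finset ι → M`, the value at `s` being the coefficient of the wedge `e_s`.
For `A i` the multiplication by `x i` this is the Koszul differential. -/
def kdel (A : ι → M →+ M) : (Finset ι → M) →+ (Finset ι → M) where
  toFun f s := ∑ i, if i ∈ s then 0 else ksgn i s • A i (f (insert i s))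
  map_zero' := by ext s; simp
  map_add' f g := by
    ext s
    simp only [Pi.add_apply, ← Finset.sum_add_distrib, map_add, smul_add]
    exact Finset.sum_congr rfl fun i _ => by split_ifs <;> simp

/-- The operator `∑ⱼ B j ⊗ (e_j ∧ -)` on `M ⊗ ⋀ ℤ^ι`. For `B j = ∂/∂xⱼ` this is the de Rham
differential. -/
def khom (B : ι → M →+ M) : (Finset ι → M) →+ (Finset ι → M) where
  toFun f s := ∑ j, if j ∈ s then ksgn j s • B j (f (s.erase j)) else 0
  map_zero' := by ext s; simp
  map_add' f g := by
    ext s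
    simp only [Pi.add_apply, ← Finset.sum_add_distrib, map_add, smul_add]
    exact Finset.sum_congr rfl fun i _ => by split_ifs <;> simp

lemma kdel_apply (A : ι → M →+ M) (f : Finset ι → M) (s : Finset ι) :
    kdel A f s = ∑ i, if i ∈ s then 0 else ksgn i s • A i (f (insert i s)) := rfl

lemma khom_apply (B : ι → M →+ M) (f : Finset ι → M) (s : Finset ι) :
    khom B f s = ∑ j, if j ∈ s then ksgn j s • B j (f (s.erase j)) else 0 := rfl

/-- `f` is homogeneous of exterior degree `p`. -/
def KDeg (p : ℕ) (f : Finset ι → M) : Prop := ∀ s, s.card ≠ p → f s = 0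

omit [LinearOrder ι] [Fintype ι] in
lemma KDeg.add {p : ℕ} {f g : Finset ι → M} (hf : KDeg p f) (hg : KDeg p g) : KDeg p (f + g) :=
  fun s hs => by simp [hf s hs, hg s hs]

omit [LinearOrder ι] [Fintype ι] in
lemma KDeg.sub {p : ℕ} {f g : Finset ι → M} (hf : KDeg p f) (hg : KDeg p g) : KDeg p (f - g) :=
  fun s hs => by simp [hf s hs, hg s hs]

lemma KDeg.kdel {p : ℕ} {f : Finset ι → M} (A : ι → M →+ M) (hf : KDeg (p + 1) f) :
    KDeg p (kdel A f) := fun s hs => by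
  rw [kdel_apply]
  refine Finset.sum_eq_zero fun i _ => ?_
  split_ifs with h
  · rfl
  · rw [hf (insert i s) (by rw [Finset.card_insert_of_notMem h]; omega)]; simp

lemma KDeg.khom {p : ℕ} {f : Finset ι → M} (B : ι → M →+ M) (hf : KDeg p f) :
    KDeg (p + 1) (khom B f) := fun s hs => by
  rw [khom_apply]
  refine Finset.sum_eq_zero fun i _ => ?_
  split_ifs with h
  · rw [hf (s.erase i) (by have := Finset.card_erase_add_one h; omega)]; simp
  · rfl

lemma kdel_kdel (A : ι → M →+ M) (hA : ∀ i j m, A i (A j m) = A j (A i m))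
    (h2 : ∀ m : M, m + m = 0 → m = 0) (f : Finset ι → M) : kdel A (kdel A f) = 0 := by
  ext s
  set F : ι → ι → M := fun i j => if i ∈ s then 0 else if j ∈ insert i s then 0 else
    (ksgn i s * ksgn j (insert i s)) • A i (A j (f (insert j (insert i s)))) with hF
  have h1 : kdel A (kdel A f) s = ∑ i, ∑ j, F i j := by
    rw [kdel_apply]
    refine Finset.sum_congr rfl fun i _ => ?_
    by_cases hi : i ∈ s
    · simp [hF, hi]
    · simp only [hF, hi, if_false]
      rw [kdel_apply, map_sum, Finset.smul_sum]
      refine Finset.sum_congr rfl fun j _ => ?_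
      split_ifs
      · simp
      · rw [map_zsmul, smul_smul]
  have hsw : ∀ i j, F j i = - F i j := by
    intro i j
    simp only [hF, Finset.mem_insert]
    by_cases hi : i ∈ s
    · simp [hi]
    by_cases hj : j ∈ s
    · simp [hj]
    by_cases hij : i = j
    · subst hij; simp
    simp only [hi, hj, hij, Ne.symm hij, if_false, or_self]
    rw [Finset.insert_comm i j, hA j i, ← neg_smul, ksgn_insert hi, ksgn_insert hj]
    congr 1
    rcases lt_or_gt_of_ne hij with h | h
    · simp [h, not_lt_of_gt h]; ring
    · simp [h, not_lt_of_gt h]; ring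
  apply h2
  rw [h1]
  nth_rewrite 2 [Finset.sum_comm]
  rw [← Finset.sum_add_distrib]
  refine Finset.sum_eq_zero fun i _ => ?_
  rw [← Finset.sum_add_distrib]
  exact Finset.sum_eq_zero fun j _ => by rw [hsw]; simp

/-- The canonical anticommutation relations: only the diagonal terms survive. -/
lemma kdel_khom_add (A B : ι → M →+ M) (hAB : ∀ i j, i ≠ j → ∀ m, A i (B j m) = B j (A i m))
    (f : Finset ι → M) (s : Finset ι) :
    kdel A (khom B f) s + khom B (kdel A f) s =
      ∑ i, if i ∈ s then B i (A i (f s)) else A i (B i (f s)) := by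
  set F : ι → ι → M := fun i j => if i ∈ s then 0 else if j ∈ insert i s then
    (ksgn i s * ksgn j (insert i s)) • A i (B j (f ((insert i s).erase j))) else 0 with hF
  set G : ι → ι → M := fun i j => if j ∈ s then if i ∈ s.erase j then 0 else
    (ksgn j s * ksgn i (s.erase j)) • B j (A i (f (insert i (s.erase j)))) else 0 with hG
  have h1 : kdel A (khom B f) s = ∑ i, ∑ j, F i j := by
    rw [kdel_apply]
    refine Finset.sum_congr rfl fun i _ => ?_
    by_cases hi : i ∈ s
    · simp [hF, hi]
    · simp only [hF, hi, if_false]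
      rw [khom_apply, map_sum, Finset.smul_sum]
      refine Finset.sum_congr rfl fun j _ => ?_
      split_ifs
      · rw [map_zsmul, smul_smul]
      · simp
  have h2 : khom B (kdel A f) s = ∑ i, ∑ j, G i j := by
    rw [khom_apply, Finset.sum_comm]
    refine Finset.sum_congr rfl fun j _ => ?_
    by_cases hj : j ∈ s
    · simp only [hG, hj, if_true]
      rw [kdel_apply, map_sum, Finset.smul_sum]
      refine Finset.sum_congr rfl fun i _ => ?_
      split_ifs
      · simp
      · rw [map_zsmul, smul_smul]
    · simp [hG, hj]
  rw [h1, h2, ← Finset.sum_add_distrib]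
  refine Finset.sum_congr rfl fun i _ => ?_
  rw [← Finset.sum_add_distrib, Finset.sum_eq_single i]
  · by_cases hi : i ∈ s
    · simp [hF, hG, hi, ksgn_erase, ksgn_mul_self, Finset.insert_erase]
    · simp [hF, hG, hi, ksgn_insert, ksgn_mul_self]
  · intro j _ hji
    by_cases hi : i ∈ s
    · simp [hF, hG, hi, Ne.symm hji]
    by_cases hj : j ∈ s
    · simp only [hF, hG, hi, hj, Finset.mem_insert, Finset.mem_erase, hji, if_true, if_false,
        or_true, and_false]
      rw [Finset.erase_insert_of_ne (Ne.symm hji), ← hAB i j (Ne.symm hji), ← add_smul,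
        ksgn_insert hi, ksgn_erase hj]
      convert zero_smul ℤ _
      rcases lt_or_gt_of_ne hji with h | h
      · simp [h, not_lt_of_gt h]; ring
      · simp [h, not_lt_of_gt h]; ring
    · simp [hF, hG, hi, hj, hji]
  · simp

end Koszul

/-! ### Koszul and de Rham differentials on polynomial rings -/

section PolyKoszul

variable {ι : Type*} [LinearOrder ι] [Fintype ι] {k : Type*} [Field k] [CharZero k]

/-- The Koszul differential of the variables on `k[X] ⊗ ⋀ k^ι`. -/
noncomputable def kd : (Finset ι → MvPolynomial ι k) →+ (Finset ι → MvPolynomial ι k) :=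
  kdel fun i => AddMonoidHom.mulLeft (X i)

lemma kd_kd (f : Finset ι → MvPolynomial ι k) : kd (kd f) = 0 :=
  kdel_kdel _ (fun i j m => by simp [mul_left_comm]) (fun m h => by simpa using h) f

omit [CharZero k] in
lemma kd_mul (a : MvPolynomial ι k) (f : Finset ι → MvPolynomial ι k) :
    kd (fun s => a * f s) = fun s => a * kd f s := by
  ext1 s
  simp only [kd, kdel_apply, Finset.mul_sum, AddMonoidHom.coe_mulLeft]
  refine Finset.sum_congr rfl fun i _ => ?_
  split_ifs
  · simp
  · rw [mul_smul_comm, mul_left_comm]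

omit [CharZero k] in
lemma kd_mem {Q : Ideal (MvPolynomial ι k)} {f : Finset ι → MvPolynomial ι k}
    (hf : ∀ s, f s ∈ Q) (s : Finset ι) : kd f s ∈ Q := by
  rw [kd, kdel_apply]
  refine sum_mem fun i _ => ?_
  split_ifs
  · exact zero_mem _
  · exact zsmul_mem (Ideal.mul_mem_left _ _ (hf _)) _

omit [CharZero k] [LinearOrder ι] in
lemma mem_maxHomIdeal {a : MvPolynomial ι k} (ha : a ∈ maxHomIdeal k ι) :
    ∃ c : ι → MvPolynomial ι k, ∑ i, c i * X i = a := by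
  rw [maxHomIdeal, Ideal.mem_span_range_iff_exists_fun] at ha
  exact ha

omit [CharZero k] in
/-- Multiplication by an element of the maximal homogeneous ideal is null-homotopic on the Koszul
complex of `k[X] ⧸ Q`. -/
lemma exists_homotopy {a : MvPolynomial ι k} (ha : a ∈ maxHomIdeal k ι)
    {Q : Ideal (MvPolynomial ι k)} {f : Finset ι → MvPolynomial ι k} {p : ℕ} (hf : KDeg p f)
    (hf0 : ∀ s, kd f s ∈ Q) :
    ∃ g, KDeg (p + 1) g ∧ ∀ s, a * f s - kd g s ∈ Q := by
  obtain ⟨c, rfl⟩ := mem_maxHomIdeal ha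
  refine ⟨khom (fun i => AddMonoidHom.mulLeft (c i)) f, hf.khom _, fun s => ?_⟩
  have := kdel_khom_add (fun i => AddMonoidHom.mulLeft (X i))
    (fun i => AddMonoidHom.mulLeft (c i)) (fun i j _ m => by simp [mul_left_comm]) f s
  change kd _ s + khom _ (kd f) s = _ at this
  have h2 : (∑ i, c i * X i) * f s = ∑ i, if i ∈ s then (c i * (X i * f s))
      else (X i * (c i * f s)) := by
    rw [Finset.sum_mul]
    exact Finset.sum_congr rfl fun i _ => by split_ifs <;> ring
  rw [h2]
  refine (this ▸ add_sub_cancel_left _ _ : _ - _ = khom _ (kd f) s) ▸ ?_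
  rw [khom_apply]
  refine sum_mem fun i _ => ?_
  split_ifs
  · exact zsmul_mem (Ideal.mul_mem_left _ _ (hf0 _)) _
  · exact zero_mem _

/-- The Koszul homology in degree `p` of the ideal `Q`, as a module, vanishes. -/
def HS (Q : Ideal (MvPolynomial ι k)) (p : ℕ) : Prop :=
  ∀ z : Finset ι → MvPolynomial ι k, KDeg p z → (∀ s, z s ∈ Q) → kd z = 0 →
    ∃ w, KDeg (p + 1) w ∧ (∀ s, w s ∈ Q) ∧ kd w = z

/-- The Koszul homology in degree `p` of `k[X] ⧸ Q` vanishes. -/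
def KQ (Q : Ideal (MvPolynomial ι k)) (p : ℕ) : Prop :=
  ∀ z : Finset ι → MvPolynomial ι k, KDeg p z → (∀ s, kd z s ∈ Q) →
    ∃ w, KDeg (p + 1) w ∧ ∀ s, z s - kd w s ∈ Q

/-- The partial Euler operator `∑_{i ∈ T} Xᵢ ∂/∂Xᵢ`. -/
noncomputable def euler (T : Finset ι) :
    Derivation k (MvPolynomial ι k) (MvPolynomial ι k) :=
  ∑ i ∈ T, (X i : MvPolynomial ι k) • pderiv i

omit [CharZero k] [LinearOrder ι] [Fintype ι] in
lemma euler_apply (T : Finset ι) (f : MvPolynomial ι k) :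
    euler T f = ∑ i ∈ T, X i * pderiv i f := by
  have : ∀ T : Finset ι, (∑ i ∈ T, (X i : MvPolynomial ι k) • pderiv (R := k) i) f
      = ∑ i ∈ T, X i * pderiv i f := by
    intro T
    classical
    induction T using Finset.induction_on with
    | empty => simp
    | insert a s ha ih => rw [Finset.sum_insert ha, Finset.sum_insert ha, ← ih]; rfl
  exact this T

omit [CharZero k] [LinearOrder ι] [Fintype ι] in
lemma coeff_euler (T : Finset ι) (f : MvPolynomial ι k) (a : ι →₀ ℕ) :
    coeff a (euler T f) = ((∑ i ∈ T, a i : ℕ) : k) * coeff a f := by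
  classical
  induction f using MvPolynomial.induction_on' with
  | add p q hp hq => rw [map_add, coeff_add, hp, hq, coeff_add, mul_add]
  | monomial u r =>
    rw [euler_apply]
    have : ∑ i ∈ T, X i * pderiv i (monomial u r)
        = ((∑ i ∈ T, u i : ℕ) : k) • monomial u r := by
      rw [Nat.cast_sum, Finset.sum_smul]
      refine Finset.sum_congr rfl fun i _ => ?_
      rw [X_mul_pderiv_monomial, Nat.cast_smul_eq_nsmul]
    rw [this, coeff_smul, coeff_monomial]
    split_ifs with h
    · rw [h, smul_eq_mul]
    · simp

omit [CharZero k] in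
/-- The Cartan homotopy formula for the de Rham differential in the variables of `T`. -/
lemma kd_deRham (T : Finset ι) (f : Finset ι → MvPolynomial ι k) (s : Finset ι) :
    kd (khom (fun i => if i ∈ T then (pderiv (R := k) i).toLinearMap.toAddMonoidHom else 0) f) s +
      khom (fun i => if i ∈ T then (pderiv (R := k) i).toLinearMap.toAddMonoidHom else 0) (kd f) s
      = euler T (f s) + ((T ∩ s).card : k) • f s := by
  refine (kdel_khom_add _ _ ?_ f s).trans ?_
  · intro i j hij m
    by_cases hj : j ∈ T
    · simp [hj, pderiv_X_of_ne hij, mul_comm]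
    · simp [hj]
  · rw [euler_apply, Nat.cast_smul_eq_nsmul, ← Finset.sum_const, ← Finset.sum_filter_add_sum_filter_not
      Finset.univ (· ∈ T), Finset.sum_eq_zero (s := Finset.univ.filter (· ∉ T)), add_zero]
    · have : ∑ _i ∈ T ∩ s, f s = ∑ i ∈ T, if i ∈ s then f s else 0 := by
        rw [← Finset.sum_filter]
        congr 1
      rw [this, ← Finset.sum_add_distrib]
      simp only [Finset.filter_mem_eq_inter, Finset.univ_inter]
      refine Finset.sum_congr rfl fun i hi => ?_
      by_cases his : i ∈ s
      · simp [hi, his, mul_comm, add_comm]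
      · simp [hi, his]
    · intro i hi
      simp at hi
      simp [hi]

/-- If all weights (polynomial plus exterior degree in the variables of `T`) occurring in a Koszul
cycle with coefficients in `Q` are positive, then the cycle is a boundary in the Koszul complex
of `Q'`, provided that `∂/∂Xᵢ` maps `Q` to `Q'` for `i ∈ T`. -/
lemma deRham_exact (T : Finset ι) {Q Q' : Ideal (MvPolynomial ι k)}
    (hE : ∀ f ∈ Q, euler T f ∈ Q) (hD : ∀ i ∈ T, ∀ f ∈ Q, pderiv i f ∈ Q') {p : ℕ}
    {z : Finset ι → MvPolynomial ι k} (hz : KDeg p z) (hzQ : ∀ s, z s ∈ Q) (hz0 : kd z = 0)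
    (hw : ∀ s a, coeff a (z s) ≠ 0 → ∑ i ∈ T, a i + (T ∩ s).card ≠ 0) :
    ∃ w, KDeg (p + 1) w ∧ (∀ s, w s ∈ Q') ∧ kd w = z := by
  classical
  have key : ∀ F : Finset ℕ, 0 ∉ F → ∀ z : Finset ι → MvPolynomial ι k, KDeg p z →
      (∀ s, z s ∈ Q) → kd z = 0 →
      (∀ s a, coeff a (z s) ≠ 0 → ∑ i ∈ T, a i + (T ∩ s).card ∈ F) →
      ∃ w, KDeg (p + 1) w ∧ (∀ s, w s ∈ Q') ∧ kd w = z := by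
    intro F
    induction F using Finset.induction_on with
    | empty =>
      intro _ z hz hzQ hz0 hw
      refine ⟨0, fun s _ => rfl, fun s => zero_mem _, ?_⟩
      rw [map_zero]
      ext s a
      by_contra h
      exact absurd (hw s a (by simpa [eq_comm] using h)) (by simp)
    | insert e F heF ih =>
      intro h0 z hz hzQ hz0 hw
      set d := khom (M := MvPolynomial ι k) (fun i => if i ∈ T then
        (pderiv (R := k) i).toLinearMap.toAddMonoidHom else 0) with hd
      have hcar : ∀ s, kd (d z) s = euler T (z s) + ((T ∩ s).card : k) • z s := by
        intro s
        rw [← kd_deRham T z s, hz0, map_zero, Pi.zero_apply, add_zero]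
      have hdQ : ∀ s, d z s ∈ Q' := by
        intro s
        rw [hd, khom_apply]
        refine sum_mem fun i _ => ?_
        split_ifs with h1 h2
        · exact zsmul_mem (hD i h2 _ (hzQ _)) _
        · simp
        · exact zero_mem _
      have he : (e : k) ≠ 0 := by
        rw [Nat.cast_ne_zero]
        rintro rfl
        simp at h0
      have hkC : kd (fun s => C (e : k) * z s) = 0 := by
        rw [kd_mul, hz0]; ext; simp
      obtain ⟨w, hw1, hw2, hw3⟩ := ih (fun h => h0 (Finset.mem_insert_of_mem h))
        (kd (d z) - fun s => C (e : k) * z s) ((hz.khom _).kdel _ |>.sub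
          (fun s hs => by simp [hz s hs]))
        (fun s => by
          rw [Pi.sub_apply, hcar]
          exact sub_mem (add_mem (hE _ (hzQ s)) (by
            rw [smul_eq_C_mul]; exact Ideal.mul_mem_left _ _ (hzQ s)))
            (Ideal.mul_mem_left _ _ (hzQ s)))
        (by rw [map_sub, kd_kd, hkC, sub_zero])
        (fun s a h => by
          rw [Pi.sub_apply, hcar, coeff_sub, coeff_add, coeff_euler, coeff_smul, coeff_C_mul,
            smul_eq_mul, ← add_mul, ← sub_mul, ← Nat.cast_add] at h
          have h1 := hw s a (right_ne_zero_of_mul h)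
          rcases Finset.mem_insert.mp h1 with h2 | h2
          · rw [h2, sub_self, zero_mul] at h; exact absurd rfl h
          · exact h2)
      refine ⟨fun s => C (e : k)⁻¹ * (d z - w) s, fun s hs => ?_, fun s => ?_, ?_⟩
      · change _ * (d z - w) s = 0
        rw [((hz.khom _).sub hw1) s hs, mul_zero]
      · exact Ideal.mul_mem_left _ _ (sub_mem (hdQ s) (hw2 s))
      · rw [kd_mul, map_sub, hw3]
        ext1 s
        simp only [Pi.sub_apply, sub_sub_cancel]
        rw [← mul_assoc, ← C_mul, inv_mul_cancel₀ he, C_1, one_mul]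
  refine key (Finset.univ.biUnion fun s => (z s).support.image
    fun a => ∑ i ∈ T, a i + (T ∩ s).card) ?_ z hz hzQ hz0 ?_
  · simp only [Finset.mem_biUnion, Finset.mem_image, not_exists, not_and]
    intro s _ a ha
    exact hw s a (mem_support_iff.mp ha)
  · intro s a h
    exact Finset.mem_biUnion.mpr ⟨s, Finset.mem_univ _,
      Finset.mem_image.mpr ⟨a, mem_support_iff.mpr h, rfl⟩⟩

/-- The Koszul complex of the polynomial ring is exact in positive degrees, and the elements of
degree `0` in the maximal homogeneous ideal are boundaries. -/
lemma koszul_acyclic {p : ℕ} {z : Finset ι → MvPolynomial ι k} (hz : KDeg p z) (hz0 : kd z = 0)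
    (h : 0 < p ∨ ∀ s, z s ∈ maxHomIdeal k ι) : ∃ w, KDeg (p + 1) w ∧ kd w = z := by
  classical
  obtain ⟨w, h1, -, h2⟩ := deRham_exact (Q := ⊤) (Q' := ⊤) Finset.univ (by simp) (by simp) hz
    (by simp) hz0 (fun s a ha => by
      rcases h with h | h
      · by_cases hs : s.card = p
        · simp; intro _ h1; subst h1; simp at hs; omega
        · rw [hz s hs] at ha; simp at ha
      · have h1 := h s
        rw [maxHomIdeal, ← Set.image_univ, mem_ideal_span_X_image] at h1
        obtain ⟨i, -, hi⟩ := h1 a (mem_support_iff.mpr ha)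
        intro h2
        have := Finset.sum_eq_zero_iff.mp (Nat.eq_zero_of_add_eq_zero_right h2) i (Finset.mem_univ _)
        exact hi this)
  exact ⟨w, h1, h2⟩

end PolyKoszul

/-! ### Koszul homology of ideals -/

section Chase

variable {ι : Type*} [LinearOrder ι] [Fintype ι] {k : Type*} [Field k] [CharZero k]

lemma KQ_succ_of_HS {Q : Ideal (MvPolynomial ι k)} {p : ℕ} (h : HS Q p) : KQ Q (p + 1) := by
  intro z hz hzQ
  obtain ⟨w, hw, hwQ, hwz⟩ := h (kd z) (hz.kdel _) hzQ (kd_kd z)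
  obtain ⟨v, hv, hvz⟩ := koszul_acyclic (hz.sub hw) (by rw [map_sub, hwz, sub_self])
    (Or.inl p.succ_pos)
  exact ⟨v, hv, fun s => by rw [hvz]; simpa using hwQ s⟩

lemma HS_of_KQ_succ {Q : Ideal (MvPolynomial ι k)} (hQ : Q ≤ maxHomIdeal k ι) {p : ℕ}
    (h : KQ Q (p + 1)) : HS Q p := by
  intro z hz hzQ hz0
  obtain ⟨y, hy, rfl⟩ := koszul_acyclic hz hz0 (Or.inr fun s => hQ (hzQ s))
  obtain ⟨v, hv, hvy⟩ := h y hy hzQ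
  refine ⟨y - kd v, hy.sub (hv.kdel _), hvy, ?_⟩
  rw [map_sub, kd_kd, sub_zero]

omit [CharZero k] in
lemma exists_split {Y₁ Y₂ : Ideal (MvPolynomial ι k)} {p : ℕ}
    {z : Finset ι → MvPolynomial ι k} (hz : KDeg p z) (hzQ : ∀ s, z s ∈ Y₁ ⊔ Y₂) :
    ∃ y₁ y₂, KDeg p y₁ ∧ KDeg p y₂ ∧ (∀ s, y₁ s ∈ Y₁) ∧ (∀ s, y₂ s ∈ Y₂) ∧ z = y₁ + y₂ := by
  have : ∀ s, ∃ a b, a ∈ Y₁ ∧ b ∈ Y₂ ∧ a + b = z s ∧ (s.card ≠ p → a = 0 ∧ b = 0) := by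
    intro s
    by_cases hs : s.card = p
    · obtain ⟨a, ha, b, hb, hab⟩ := Submodule.mem_sup.mp (hzQ s)
      exact ⟨a, b, ha, hb, hab, fun h => absurd hs h⟩
    · exact ⟨0, 0, zero_mem _, zero_mem _, by rw [hz s hs, add_zero], fun _ => ⟨rfl, rfl⟩⟩
  choose y₁ y₂ h1 h2 h3 h4 using this
  exact ⟨y₁, y₂, fun s hs => (h4 s hs).1, fun s hs => (h4 s hs).2, h1, h2,
    funext fun s => (h3 s).symm⟩

/-- The long exact sequence of `0 → Y₁ ⊓ Y₂ → Y₁ ⊕ Y₂ → Y₁ ⊔ Y₂ → 0`. -/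
lemma HS_sup_succ {Y₁ Y₂ : Ideal (MvPolynomial ι k)} {p : ℕ} (h1 : HS Y₁ (p + 1))
    (h2 : HS Y₂ (p + 1)) (h : HS (Y₁ ⊓ Y₂) p) : HS (Y₁ ⊔ Y₂) (p + 1) := by
  intro z hz hzQ hz0
  obtain ⟨y₁, y₂, d1, d2, m1, m2, rfl⟩ := exists_split hz hzQ
  have hneg : kd y₁ = - kd y₂ := by rwa [map_add, ← eq_neg_iff_add_eq_zero] at hz0
  obtain ⟨x, hx, hxQ, hxy⟩ := h (kd y₁) (d1.kdel _) (fun s => ⟨kd_mem m1 s, by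
    rw [hneg]; exact neg_mem (kd_mem m2 s)⟩) (kd_kd _)
  obtain ⟨w₁, e1, f1, g1⟩ := h1 (y₁ - x) (d1.sub hx) (fun s => sub_mem (m1 s) (hxQ s).1)
    (by rw [map_sub, hxy, sub_self])
  obtain ⟨w₂, e2, f2, g2⟩ := h2 (y₂ + x) (d2.add hx) (fun s => add_mem (m2 s) (hxQ s).2)
    (by rw [map_add, hxy, hneg, add_neg_cancel])
  refine ⟨w₁ + w₂, e1.add e2, fun s => add_mem (Ideal.mem_sup_left (f1 s))
    (Ideal.mem_sup_right (f2 s)), ?_⟩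
  rw [map_add, g1, g2]; abel

/-- Every Koszul cycle of degree `p` with coefficients in `X` is a boundary in `Y`: the map in
Koszul homology induced by `X ⊆ Y` vanishes. -/
def HZero (X Y : Ideal (MvPolynomial ι k)) (p : ℕ) : Prop :=
  ∀ z : Finset ι → MvPolynomial ι k, KDeg p z → (∀ s, z s ∈ X) → kd z = 0 →
    ∃ w, KDeg (p + 1) w ∧ (∀ s, w s ∈ Y) ∧ kd w = z

omit [CharZero k] in
lemma HZero.of_HS {X Y : Ideal (MvPolynomial ι k)} {p : ℕ} (hXY : X ≤ Y) (h : HS Y p) :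
    HZero X Y p := fun z hz hzX hz0 => h z hz (fun s => hXY (hzX s)) hz0

omit [CharZero k] in
lemma HZero.mono {X Y Y' : Ideal (MvPolynomial ι k)} {p : ℕ} (hY : Y ≤ Y') (h : HZero X Y p) :
    HZero X Y' p := fun z hz hzX hz0 => by
  obtain ⟨w, h1, h2, h3⟩ := h z hz hzX hz0
  exact ⟨w, h1, fun s => hY (h2 s), h3⟩

lemma HS_inf_of_sup {Y₁ Y₂ : Ideal (MvPolynomial ι k)} {p : ℕ} (z1 : HZero (Y₁ ⊓ Y₂) Y₁ p)
    (z2 : HZero (Y₁ ⊓ Y₂) Y₂ p) (h : HS (Y₁ ⊔ Y₂) (p + 1)) : HS (Y₁ ⊓ Y₂) p := by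
  intro x hx hxQ hx0
  obtain ⟨y₁, d1, m1, e1⟩ := z1 x hx hxQ hx0
  obtain ⟨y₂, d2, m2, e2⟩ := z2 x hx hxQ hx0
  obtain ⟨w, dw, mw, ew⟩ := h (y₁ - y₂) (d1.sub d2)
    (fun s => sub_mem (Ideal.mem_sup_left (m1 s)) (Ideal.mem_sup_right (m2 s)))
    (by rw [map_sub, e1, e2, sub_self])
  obtain ⟨w₁, w₂, dw1, dw2, mw1, mw2, rfl⟩ := exists_split dw mw
  refine ⟨y₁ - kd w₁, d1.sub (dw1.kdel _), fun s => ⟨sub_mem (m1 s) (kd_mem mw1 s), ?_⟩, ?_⟩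
  · have : y₁ - kd w₁ = y₂ + kd w₂ := by
      rw [map_add] at ew
      rw [sub_eq_iff_eq_add, add_assoc, add_comm (kd w₂), ew]; abel
    rw [this]
    exact add_mem (m2 s) (kd_mem mw2 s)
  · rw [map_sub, kd_kd, sub_zero, e1]

lemma HS_left_of_sup {Y₁ Y₂ : Ideal (MvPolynomial ι k)} {p : ℕ} (z1 : HZero (Y₁ ⊓ Y₂) Y₁ p)
    (h : HS (Y₁ ⊔ Y₂) p) : HS Y₁ p := by
  intro y hy hyQ hy0
  obtain ⟨w, dw, mw, ew⟩ := h y hy (fun s => Ideal.mem_sup_left (hyQ s)) hy0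
  obtain ⟨w₁, w₂, dw1, dw2, mw1, mw2, rfl⟩ := exists_split dw mw
  rw [map_add] at ew
  obtain ⟨v, dv, mv, ev⟩ := z1 (kd w₂) (dw2.kdel _) (fun s => ⟨by
    rw [show kd w₂ = y - kd w₁ by rw [← ew]; abel]
    exact sub_mem (hyQ s) (kd_mem mw1 s), kd_mem mw2 s⟩) (kd_kd _)
  exact ⟨w₁ + v, dw1.add dv, fun s => add_mem (mw1 s) (mv s), by rw [map_add, ev, ew]⟩

/-- `d` is the top nonvanishing degree of the Koszul homology of the ideal `Q`, that is, the
projective dimension of `Q`. -/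
def PD (Q : Ideal (MvPolynomial ι k)) (d : ℕ) : Prop := ¬ HS Q d ∧ ∀ q, d < q → HS Q q

/-- When the maps `Y₁ ⊓ Y₂ → Yᵢ` induce zero in Koszul homology, the long exact sequence splits
into short ones. -/
lemma PD.sup {Y₁ Y₂ : Ideal (MvPolynomial ι k)} {d₁ d₂ d : ℕ} (h1 : PD Y₁ d₁) (h2 : PD Y₂ d₂)
    (h : PD (Y₁ ⊓ Y₂) d) (z1 : ∀ p, HZero (Y₁ ⊓ Y₂) Y₁ p) (z2 : ∀ p, HZero (Y₁ ⊓ Y₂) Y₂ p) :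
    PD (Y₁ ⊔ Y₂) (max d₁ (max d₂ (d + 1))) := by
  refine ⟨fun hs => ?_, fun q hq => ?_⟩
  · rcases max_choice d₁ (max d₂ (d + 1)) with e | e
    · exact h1.1 (HS_left_of_sup (z1 _) (e ▸ hs))
    · rw [e] at hs
      rcases max_choice d₂ (d + 1) with e | e
      · rw [e, sup_comm] at hs
        exact h2.1 (HS_left_of_sup (by rw [inf_comm]; exact z2 _) hs)
      · rw [e] at hs
        exact h.1 (HS_inf_of_sup (z1 _) (z2 _) hs)
  · obtain ⟨q, rfl⟩ : ∃ q', q = q' + 1 := ⟨q - 1, by omega⟩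
    simp only [max_lt_iff] at hq
    exact HS_sup_succ (h1.2 _ hq.1) (h2.2 _ hq.2.1) (h.2 _ (by omega))

lemma PD.inf {Y₁ Y₂ : Ideal (MvPolynomial ι k)} {d₁ d₂ : ℕ} (h1 : PD Y₁ d₁) (h2 : PD Y₂ d₂)
    (h : PD (Y₁ ⊔ Y₂) (d₁ + d₂ + 1)) : PD (Y₁ ⊓ Y₂) (d₁ + d₂) := by
  refine ⟨fun hs => h.1 (HS_sup_succ (h1.2 _ (by omega)) (h2.2 _ (by omega)) hs), fun q hq => ?_⟩
  exact HS_inf_of_sup (.of_HS inf_le_left (h1.2 _ (by omega)))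
    (.of_HS inf_le_right (h2.2 _ (by omega))) (h.2 _ (by omega))

lemma PD.unique {Q : Ideal (MvPolynomial ι k)} {d d' : ℕ} (h : PD Q d) (h' : PD Q d') :
    d = d' := by
  rcases lt_trichotomy d d' with e | e | e
  · exact absurd (h.2 _ e) h'.1
  · exact e
  · exact absurd (h'.2 _ e) h.1

end Chase

section Depth

variable {ι : Type*} [LinearOrder ι] [Fintype ι] {k : Type*} [Field k] [CharZero k]

lemma KQ_sup_span {Q : Ideal (MvPolynomial ι k)} {a : MvPolynomial ι k}
    (hreg : ∀ y, a * y ∈ Q → y ∈ Q) {q : ℕ} (h1 : KQ Q (q + 1)) (h0 : KQ Q q) :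
    KQ (Q ⊔ Ideal.span {a}) (q + 1) := by
  intro z hz hzQ
  obtain ⟨y₁, y₂, d1, d2, m1, m2, e⟩ := exists_split (hz.kdel _) hzQ
  have : ∀ s, ∃ u, y₂ s = a * u ∧ (s.card ≠ q → u = 0) := by
    intro s
    by_cases hs : s.card = q
    · obtain ⟨u, hu⟩ := Ideal.mem_span_singleton.mp (m2 s)
      exact ⟨u, hu, fun h => absurd hs h⟩
    · exact ⟨0, by rw [d2 s hs, mul_zero], fun _ => rfl⟩
  choose y hy hyd using this
  obtain rfl : y₂ = fun s => a * y s := funext hy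
  have h2 : ∀ s, kd y s ∈ Q := by
    intro s
    apply hreg
    have h3 : kd y₁ + (fun s => a * kd y s) = 0 := by
      rw [← kd_mul, ← map_add, ← e]; exact kd_kd z
    have h4 : a * kd y s = - kd y₁ s := by
      rw [eq_neg_iff_add_eq_zero, add_comm]; exact congrFun h3 s
    rw [h4]
    exact neg_mem (kd_mem m1 s)
  obtain ⟨w, hw, hwy⟩ := h0 y hyd h2
  obtain ⟨v, hv, hvz⟩ := h1 (z - fun s => a * w s) (hz.sub fun s hs => by simp [hw s hs]) (by
    intro s
    have e' : kd z = y₁ + fun s => a * y s := e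
    rw [map_sub, kd_mul, e']
    have : a * (y s - kd w s) + y₁ s ∈ Q := add_mem (Ideal.mul_mem_left _ _ (hwy s)) (m1 s)
    convert this using 1
    simp only [Pi.sub_apply, Pi.add_apply]; ring)
  refine ⟨v, hv, fun s => ?_⟩
  have : z s - kd v s = ((z - fun s => a * w s) s - kd v s) + a * w s := by
    simp only [Pi.sub_apply]; ring
  rw [this]
  exact add_mem (Ideal.mem_sup_left (hvz s)) (Ideal.mem_sup_right
    (Ideal.mul_mem_right _ _ (Ideal.mem_span_singleton_self a)))

lemma KQ_of_sup_span {Q : Ideal (MvPolynomial ι k)} {a : MvPolynomial ι k}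
    (ha : a ∈ maxHomIdeal k ι) (hreg : ∀ y, a * y ∈ Q → y ∈ Q) {q : ℕ}
    (h : KQ (Q ⊔ Ideal.span {a}) (q + 1)) : KQ Q q := by
  intro y hy hyQ
  have haQ : ∀ b, a * b ∈ Q ⊔ Ideal.span {a} := fun b => Ideal.mem_sup_right
    (Ideal.mul_mem_right _ _ (Ideal.mem_span_singleton_self a))
  obtain ⟨z, hz, hzy⟩ := exists_homotopy ha hy hyQ
  obtain ⟨v, hv, hvz⟩ := h z hz (fun s => by
    have : kd z s = a * y s - (a * y s - kd z s) := by ring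
    rw [this]
    exact sub_mem (haQ _) (Ideal.mem_sup_left (hzy s)))
  obtain ⟨y₁, y₂, d1, d2, m1, m2, e⟩ := exists_split (hz.sub (hv.kdel _)) hvz
  have : ∀ s, ∃ u, y₂ s = a * u ∧ (s.card ≠ q + 1 → u = 0) := by
    intro s
    by_cases hs : s.card = q + 1
    · obtain ⟨u, hu⟩ := Ideal.mem_span_singleton.mp (m2 s)
      exact ⟨u, hu, fun h => absurd hs h⟩
    · exact ⟨0, by rw [d2 s hs, mul_zero], fun _ => rfl⟩
  choose u hu hud using this
  obtain rfl : y₂ = fun s => a * u s := funext hu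
  refine ⟨u, hud, fun s => hreg _ ?_⟩
  have h1 : kd z s = kd y₁ s + a * kd u s := by
    have := congrArg kd e
    rw [map_sub, map_add, kd_mul] at this
    have h2 : kd (kdel (fun i => AddMonoidHom.mulLeft (X i : MvPolynomial ι k)) v) = 0 := kd_kd v
    rw [h2, sub_zero] at this
    exact congrFun this s
  have : a * (y s - kd u s) = (a * y s - kd z s) + kd y₁ s := by rw [h1]; ring
  rw [this]
  exact add_mem (hzy s) (kd_mem m1 s)

/-- `Reach Q n Q'`: there are `a₁, …, aₙ` in the maximal homogeneous ideal forming a regular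
sequence on `k[X] ⧸ Q` (possibly with zero quotient), with `Q' = Q + (a₁, …, aₙ)`. -/
inductive Reach : Ideal (MvPolynomial ι k) → ℕ → Ideal (MvPolynomial ι k) → Prop
  | refl (Q : Ideal (MvPolynomial ι k)) : Reach Q 0 Q
  | step {Q Q₁ : Ideal (MvPolynomial ι k)} {a : MvPolynomial ι k} {n : ℕ}
      (ha : a ∈ maxHomIdeal k ι) (hreg : ∀ y, a * y ∈ Q → y ∈ Q)
      (h : Reach (Q ⊔ Ideal.span {a}) n Q₁) : Reach Q (n + 1) Q₁

/-- `k[X] ⧸ Q` has a nonzero element killed by all the variables. -/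
def Soc (Q : Ideal (MvPolynomial ι k)) : Prop := ∃ u, u ∉ Q ∧ ∀ i, X i * u ∈ Q

/-- `d` is the top nonvanishing degree of the Koszul homology of `k[X] ⧸ Q`. -/
def KTop (Q : Ideal (MvPolynomial ι k)) (d : ℕ) : Prop := ¬ KQ Q d ∧ ∀ q, d < q → KQ Q q

omit [CharZero k] in
lemma KTop.unique {Q : Ideal (MvPolynomial ι k)} {d d' : ℕ} (h : KTop Q d) (h' : KTop Q d') :
    d = d' := by
  rcases lt_trichotomy d d' with e | e | e
  · exact absurd (h.2 _ e) h'.1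
  · exact e
  · exact absurd (h'.2 _ e) h.1

omit [LinearOrder ι] [CharZero k] in
lemma one_notMem_maxHomIdeal : (1 : MvPolynomial ι k) ∉ maxHomIdeal k ι := by
  intro h
  rw [maxHomIdeal, ← Set.image_univ, mem_ideal_span_X_image] at h
  obtain ⟨i, -, hi⟩ := h 0 (by simp)
  exact hi rfl

omit [CharZero k] in
lemma card_le_of_KDeg {p : ℕ} (hp : Fintype.card ι < p) {z : Finset ι → MvPolynomial ι k}
    (hz : KDeg p z) : z = 0 :=
  funext fun s => hz s (by have := s.card_le_univ; omega)

omit [CharZero k] in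
lemma Soc.ktop {Q : Ideal (MvPolynomial ι k)} (h : Soc Q) : KTop Q (Fintype.card ι) := by
  classical
  obtain ⟨u, hu, hX⟩ := h
  refine ⟨fun hK => ?_, fun q hq z hz _ => ⟨0, fun _ _ => rfl, fun s => ?_⟩⟩
  · obtain ⟨w, hw, hwz⟩ := hK (fun s => if s = Finset.univ then u else 0) (fun s hs => by
      dsimp only; rw [if_neg]; rintro rfl; exact hs rfl) (fun s => by
        rw [kd, kdel_apply]
        refine sum_mem fun i _ => ?_
        split_ifs
        · exact zero_mem _
        · exact zsmul_mem (hX i) _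
        · simp)
    have := hwz Finset.univ
    rw [card_le_of_KDeg (by omega) hw] at this
    simp at this
    exact hu this
  · rw [card_le_of_KDeg hq hz]; simp

omit [CharZero k] in
lemma KQ_zero {Q : Ideal (MvPolynomial ι k)} (hQ : Q ≤ maxHomIdeal k ι) : ¬ KQ Q 0 := by
  intro h
  obtain ⟨w, -, hw⟩ := h (fun s => if s = ∅ then 1 else 0) (fun s hs => by
    dsimp only; rw [if_neg]; rintro rfl; exact hs rfl) (fun s => by
      rw [kd, kdel_apply]
      refine sum_mem fun i _ => ?_
      split_ifs with h1 h2
      · exact zero_mem _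
      · simp at h2
      · simp)
  apply one_notMem_maxHomIdeal (k := k) (ι := ι)
  have h1 := hQ (hw ∅)
  rw [if_pos rfl] at h1
  have h2 : kd w ∅ ∈ maxHomIdeal k ι := by
    rw [kd, kdel_apply]
    refine sum_mem fun i _ => ?_
    split_ifs
    · exact zero_mem _
    · exact zsmul_mem (Ideal.mul_mem_right _ _ (Ideal.subset_span ⟨i, rfl⟩ : X i ∈ maxHomIdeal k ι)) _
  simpa using add_mem h1 h2

omit [CharZero k] [LinearOrder ι] in
lemma sup_span_le {Q : Ideal (MvPolynomial ι k)} (hQ : Q ≤ maxHomIdeal k ι)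
    {a : MvPolynomial ι k} (ha : a ∈ maxHomIdeal k ι) : Q ⊔ Ideal.span {a} ≤ maxHomIdeal k ι :=
  sup_le hQ ((Ideal.span_singleton_le_iff_mem _).mpr ha)

lemma Reach.ktop {Q Q' : Ideal (MvPolynomial ι k)} {n : ℕ} (h : Reach Q n Q')
    (hQ : Q ≤ maxHomIdeal k ι) (hs : Soc Q') : ∃ d, KTop Q d ∧ d + n = Fintype.card ι := by
  induction h with
  | refl Q => exact ⟨_, hs.ktop, rfl⟩
  | @step Q Q' a n ha hreg h ih =>
    obtain ⟨d, hd, hdn⟩ := ih (sup_span_le hQ ha) hs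
    have h1 : ∀ q, d ≤ q → KQ Q q := fun q hq => KQ_of_sup_span ha hreg (hd.2 _ (by omega))
    obtain _ | d := d
    · exact absurd (h1 0 le_rfl) (KQ_zero hQ)
    · exact ⟨d, ⟨fun h0 => hd.1 (KQ_sup_span hreg (h1 _ le_rfl) h0), fun q hq => h1 q hq⟩,
        by omega⟩

omit [CharZero k] [LinearOrder ι] in
lemma Reach.trans {Q Q' Q'' : Ideal (MvPolynomial ι k)} {n m : ℕ} (h : Reach Q n Q')
    (h' : Reach Q' m Q'') : Reach Q (n + m) Q'' := by
  induction h with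
  | refl Q => simpa using h'
  | step ha hreg h ih => rw [Nat.add_right_comm]; exact .step ha hreg (ih h')

omit [CharZero k] [LinearOrder ι] in
lemma Reach.le_max {Q Q' : Ideal (MvPolynomial ι k)} {n : ℕ} (h : Reach Q n Q')
    (hQ : Q ≤ maxHomIdeal k ι) : Q' ≤ maxHomIdeal k ι := by
  induction h with
  | refl Q => exact hQ
  | step ha hreg h ih => exact ih (sup_span_le hQ ha)

omit [CharZero k] [LinearOrder ι] in
lemma isMaximal_maxHomIdeal : (maxHomIdeal k ι).IsMaximal := by
  have : maxHomIdeal k ι = RingHom.ker (constantCoeff : MvPolynomial ι k →+* k) := by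
    ext f
    rw [maxHomIdeal, RingHom.mem_ker, ← Set.image_univ, mem_ideal_span_X_image]
    constructor
    · intro h
      by_contra h0
      obtain ⟨i, -, hi⟩ := h 0 (mem_support_iff.mpr h0)
      exact hi rfl
    · intro h m hm
      by_contra! h0
      have : m = 0 := by ext i; exact h0 i (Set.mem_univ i)
      subst this
      exact mem_support_iff.mp hm h
  rw [this]
  exact RingHom.ker_isMaximal_of_surjective _ fun c => ⟨C c, by simp⟩

omit [CharZero k] [LinearOrder ι] in
/-- Prime avoidance: if the maximal homogeneous ideal consists of zero divisors on `k[X] ⧸ Q`, it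
is an associated prime. -/
lemma soc_or_regular {Q : Ideal (MvPolynomial ι k)} :
    Soc Q ∨ ∃ a ∈ maxHomIdeal k ι, ∀ y, a * y ∈ Q → y ∈ Q := by
  by_contra! ⟨h1, h2⟩
  have hsub : (maxHomIdeal k ι : Set (MvPolynomial ι k)) ⊆
      ⋃ p ∈ associatedPrimes (MvPolynomial ι k) (MvPolynomial ι k ⧸ Q), (p : Set _) := by
    intro a ha
    rw [biUnion_associatedPrimes_eq_compl_regular]
    intro hr
    obtain ⟨y, hy, hyQ⟩ := h2 a ha
    apply hyQ
    rw [← Ideal.Quotient.eq_zero_iff_mem]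
    apply hr.right_eq_zero_of_smul
    change Ideal.Quotient.mk Q (a * y) = 0
    exact Ideal.Quotient.eq_zero_iff_mem.mpr hy
  obtain ⟨p, hp, hmp⟩ := (Ideal.subset_union_prime_finite
    (associatedPrimes.finite (MvPolynomial ι k) (MvPolynomial ι k ⧸ Q)) (f := fun p => p) ⊤ ⊤
    (fun p hp _ _ => IsAssociatedPrime.isPrime hp)).mp hsub
  obtain ⟨hpp, x, hx⟩ := Submodule.isAssociatedPrime_iff.mp hp
  have hmp' : maxHomIdeal k ι = p := isMaximal_maxHomIdeal.eq_of_le hpp.ne_top hmp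
  obtain ⟨u, rfl⟩ := Ideal.Quotient.mk_surjective x
  have hmem : ∀ a, a ∈ maxHomIdeal k ι ↔ a * u ∈ Q := fun a => by
    rw [hmp', hx, Submodule.mem_colon_singleton, Submodule.mem_bot,
      ← Ideal.Quotient.eq_zero_iff_mem]
    rfl
  refine h1 ⟨u, fun hu => ?_, fun i => (hmem _).mp (Ideal.subset_span ⟨i, rfl⟩)⟩
  exact one_notMem_maxHomIdeal ((hmem 1).mpr (by rwa [one_mul]))

end Depth

/-! ### Depth and Koszul homology -/

section Depth2

variable {ι : Type*} [LinearOrder ι] [Fintype ι] {k : Type*} [Field k] [CharZero k]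

open scoped Pointwise in
lemma smul_top_eq_map {S : Type*} [CommRing S] (Q : Ideal S) (a : S) :
    (a • ⊤ : Submodule S (S ⧸ Q)) = Submodule.map (Submodule.mkQ Q) (Ideal.span {a}) := by
  ext x
  rw [Submodule.mem_smul_pointwise_iff_exists, Submodule.mem_map]
  constructor
  · rintro ⟨y, -, rfl⟩
    obtain ⟨y, rfl⟩ := Submodule.mkQ_surjective _ y
    exact ⟨a * y, Ideal.mul_mem_right _ _ (Ideal.mem_span_singleton_self a), rfl⟩
  · rintro ⟨y, hy, rfl⟩
    obtain ⟨y, rfl⟩ := Ideal.mem_span_singleton.mp hy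
    exact ⟨Submodule.mkQ Q y, trivial, rfl⟩

/-- `(S ⧸ Q) ⧸ a(S ⧸ Q) ≃ S ⧸ (Q + (a))`. -/
noncomputable def quotSMulTopEquiv {S : Type*} [CommRing S] (Q : Ideal S) (a : S) :
    QuotSMulTop a (S ⧸ Q) ≃ₗ[S] S ⧸ (Q ⊔ Ideal.span {a}) :=
  (Submodule.quotEquivOfEq _ _ (smul_top_eq_map Q a)).trans
    (Submodule.quotientQuotientEquivQuotientSup Q (Ideal.span {a}))

lemma isSMulRegular_quot {S : Type*} [CommRing S] (Q : Ideal S) (a : S) :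
    IsSMulRegular (S ⧸ Q) a ↔ ∀ y, a * y ∈ Q → y ∈ Q := by
  rw [isSMulRegular_iff_right_eq_zero_of_smul]
  constructor
  · intro h y hy
    rw [← Ideal.Quotient.eq_zero_iff_mem] at hy ⊢
    exact h _ hy
  · intro h y hy
    obtain ⟨y, rfl⟩ := Ideal.Quotient.mk_surjective y
    exact Ideal.Quotient.eq_zero_iff_mem.mpr (h y (Ideal.Quotient.eq_zero_iff_mem.mp hy))

lemma reach_of_isRegular (rs : List (MvPolynomial ι k)) : ∀ {Q : Ideal (MvPolynomial ι k)},
    (∀ r ∈ rs, r ∈ maxHomIdeal k ι) → RingTheory.Sequence.IsRegular (MvPolynomial ι k ⧸ Q) rs →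
    ∃ Q', Reach Q rs.length Q' := by
  induction rs with
  | nil => exact fun _ _ => ⟨_, .refl _⟩
  | cons a rs ih =>
    intro Q h hr
    rw [RingTheory.Sequence.isRegular_cons_iff,
      LinearEquiv.isRegular_congr (quotSMulTopEquiv Q a), isSMulRegular_quot] at hr
    obtain ⟨Q', hQ'⟩ := ih (fun r hr => h r (List.mem_cons_of_mem _ hr)) hr.2
    exact ⟨Q', .step (h a List.mem_cons_self) hr.1 hQ'⟩

lemma isRegular_of_reach {n : ℕ} {Q Q' : Ideal (MvPolynomial ι k)} (h : Reach Q n Q')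
    (hQ : Q ≤ maxHomIdeal k ι) : ∃ rs : List (MvPolynomial ι k), rs.length = n ∧
      (∀ r ∈ rs, r ∈ maxHomIdeal k ι) ∧
      RingTheory.Sequence.IsRegular (MvPolynomial ι k ⧸ Q) rs := by
  induction h with
  | refl Q =>
    have : Nontrivial (MvPolynomial ι k ⧸ Q) := Ideal.Quotient.nontrivial_iff.mpr fun h =>
      one_notMem_maxHomIdeal (hQ (h ▸ Submodule.mem_top : (1 : MvPolynomial ι k) ∈ Q))
    exact ⟨[], rfl, by simp, .nil _ _⟩
  | @step Q Q' a n ha hreg h ih =>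
    obtain ⟨rs, h1, h2, h3⟩ := ih (sup_span_le hQ ha)
    refine ⟨a :: rs, by simp [h1], by simpa using ⟨ha, h2⟩, ?_⟩
    rw [RingTheory.Sequence.isRegular_cons_iff,
      LinearEquiv.isRegular_congr (quotSMulTopEquiv Q a), isSMulRegular_quot]
    exact ⟨hreg, h3⟩

lemma exists_reach_soc (Q : Ideal (MvPolynomial ι k)) (hQ : Q ≤ maxHomIdeal k ι) :
    ∃ n Q', Reach Q n Q' ∧ Soc Q' := by
  induction Q using WellFoundedGT.induction with
  | ind Q ih =>
    rcases soc_or_regular (Q := Q) with h | ⟨a, ha, hreg⟩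
    · exact ⟨0, Q, .refl Q, h⟩
    · have haQ : a ∉ Q := fun h =>
        one_notMem_maxHomIdeal (hQ (hreg 1 (by rwa [mul_one])))
      obtain ⟨n, Q', h1, h2⟩ := ih (Q ⊔ Ideal.span {a})
        (lt_of_le_of_ne le_sup_left fun h => haQ (by
          rw [h]; exact Ideal.mem_sup_right (Ideal.mem_span_singleton_self a)))
        (sup_span_le hQ ha)
      exact ⟨n + 1, Q', .step ha hreg h1, h2⟩

/-- All maximal regular sequences have the same length. -/
lemma depth_eq_of_reach {n : ℕ} {Q Q' : Ideal (MvPolynomial ι k)} (h : Reach Q n Q')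
    (hQ : Q ≤ maxHomIdeal k ι) (hs : Soc Q') :
    idealDepth (maxHomIdeal k ι) (MvPolynomial ι k ⧸ Q) = n := by
  have : IsGreatest {n | ∃ rs : List (MvPolynomial ι k), rs.length = n ∧
      (∀ r ∈ rs, r ∈ maxHomIdeal k ι) ∧
      RingTheory.Sequence.IsRegular (MvPolynomial ι k ⧸ Q) rs} n := by
    refine ⟨isRegular_of_reach h hQ, ?_⟩
    rintro _ ⟨rs, rfl, h1, h2⟩
    obtain ⟨Q₁, h3⟩ := reach_of_isRegular rs h1 h2
    obtain ⟨m, Q₂, h4, h5⟩ := exists_reach_soc Q₁ (h3.le_max hQ)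
    obtain ⟨d, hd, hdn⟩ := h.ktop hQ hs
    obtain ⟨d', hd', hdn'⟩ := (h3.trans h4).ktop hQ h5
    have := hd.unique hd'
    omega
  exact this.csSup_eq

/-- The Auslander–Buchsbaum formula, in terms of Koszul homology. -/
lemma KTop.add_depth {Q : Ideal (MvPolynomial ι k)} {d : ℕ} (h : KTop Q d)
    (hQ : Q ≤ maxHomIdeal k ι) :
    d + idealDepth (maxHomIdeal k ι) (MvPolynomial ι k ⧸ Q) = Fintype.card ι := by
  obtain ⟨n, Q', h1, h2⟩ := exists_reach_soc Q hQ
  obtain ⟨d', hd, hdn⟩ := h1.ktop hQ h2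
  rw [depth_eq_of_reach h1 hQ h2, h.unique hd, hdn]

lemma exists_KTop (Q : Ideal (MvPolynomial ι k)) (hQ : Q ≤ maxHomIdeal k ι) : ∃ d, KTop Q d := by
  obtain ⟨n, Q', h1, h2⟩ := exists_reach_soc Q hQ
  obtain ⟨d', hd, hdn⟩ := h1.ktop hQ h2
  exact ⟨d', hd⟩

lemma KTop_bot : KTop (⊥ : Ideal (MvPolynomial ι k)) 0 := by
  refine ⟨KQ_zero bot_le, fun q hq z hz hz0 => ?_⟩
  obtain ⟨w, hw, hwz⟩ := koszul_acyclic hz (funext fun s => hz0 s) (Or.inl hq)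
  exact ⟨w, hw, fun s => by rw [hwz, sub_self]; exact zero_mem _⟩

lemma PD.of_KTop {Q : Ideal (MvPolynomial ι k)} {d : ℕ} (hQ : Q ≤ maxHomIdeal k ι)
    (h : KTop Q (d + 1)) : PD Q d :=
  ⟨fun h0 => h.1 (KQ_succ_of_HS h0), fun q hq => HS_of_KQ_succ hQ (h.2 _ (by omega))⟩

lemma PD.ktop {Q : Ideal (MvPolynomial ι k)} {d : ℕ} (hQ : Q ≤ maxHomIdeal k ι)
    (h : PD Q d) : KTop Q (d + 1) := by
  refine ⟨fun h0 => h.1 (HS_of_KQ_succ hQ h0), fun q hq => ?_⟩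
  obtain ⟨q, rfl⟩ : ∃ q', q = q' + 1 := ⟨q - 1, by omega⟩
  exact KQ_succ_of_HS (h.2 _ (by omega))

/-- Nakayama's lemma. -/
lemma not_HS_zero {Q : Ideal (MvPolynomial ι k)} (hQ : Q ≠ ⊥) : ¬ HS Q 0 := by
  classical
  intro h
  have hle : Q ≤ maxHomIdeal k ι • Q := by
    intro f hf
    obtain ⟨w, -, hw, hwf⟩ := h (fun s => if s = ∅ then f else 0)
      (fun s hs => by dsimp only; rw [if_neg]; rintro rfl; exact hs rfl)
      (fun s => by split_ifs; exacts [hf, zero_mem _]) (by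
        funext s
        rw [kd, kdel_apply]
        refine Finset.sum_eq_zero fun i _ => ?_
        split_ifs with h1 h2
        · rfl
        · simp at h2
        · simp)
    have := congrFun hwf ∅
    rw [if_pos rfl, kd, kdel_apply] at this
    rw [← this]
    refine sum_mem fun i _ => ?_
    split_ifs
    · exact zero_mem _
    · exact zsmul_mem (Ideal.mul_mem_mul
        (Ideal.subset_span ⟨i, rfl⟩ : X i ∈ maxHomIdeal k ι) (hw _)) _
  obtain ⟨r, hr, hr0⟩ := Submodule.exists_sub_one_mem_and_smul_eq_zero_of_fg_of_le_smul
    (maxHomIdeal k ι) Q (IsNoetherian.noetherian Q) hle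
  obtain ⟨f, hf, hf0⟩ := Submodule.exists_mem_ne_zero_of_ne_bot hQ
  have : r = 0 := by simpa [hf0] using hr0 f hf
  rw [this, zero_sub, neg_mem_iff] at hr
  exact one_notMem_maxHomIdeal hr

lemma exists_PD {Q : Ideal (MvPolynomial ι k)} (hQ : Q ≠ ⊥) (hQm : Q ≤ maxHomIdeal k ι) :
    ∃ d, PD Q d := by
  obtain ⟨d, hd⟩ := exists_KTop Q hQm
  obtain _ | d := d
  · exact absurd (HS_of_KQ_succ hQm (hd.2 1 one_pos)) (not_HS_zero hQ)
  · exact ⟨d, .of_KTop hQm hd⟩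

lemma PD.add_depth {Q : Ideal (MvPolynomial ι k)} (hQm : Q ≤ maxHomIdeal k ι) {d : ℕ}
    (h : PD Q d) :
    d + 1 + idealDepth (maxHomIdeal k ι) (MvPolynomial ι k ⧸ Q) = Fintype.card ι :=
  (h.ktop hQm).add_depth hQm

lemma depth_bot : idealDepth (maxHomIdeal k ι) (MvPolynomial ι k ⧸ (⊥ : Ideal (MvPolynomial ι k)))
    = Fintype.card ι := by simpa using (KTop_bot (ι := ι) (k := k)).add_depth bot_le

end Depth2

/-! ### Ideals in tensor products over a field -/

section TensorStructure

variable {k A B R : Type*} [Field k] [CommRing A] [CommRing B] [CommRing R]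
  [Algebra k A] [Algebra k B] [Algebra k R]

/-- `R` is the tensor product over `k` of `A` and `B`, via the maps `α` and `β`. -/
def TP (α : A →ₐ[k] R) (β : B →ₐ[k] R) : Prop :=
  Function.Bijective (Algebra.TensorProduct.productMap α β)

variable {α : A →ₐ[k] R} {β : B →ₐ[k] R}

lemma TP.symm (h : TP α β) : TP β α := by
  have : (Algebra.TensorProduct.productMap β α : B ⊗[k] A → R) =
      Algebra.TensorProduct.productMap α β ∘ Algebra.TensorProduct.comm k B A := by
    have : Algebra.TensorProduct.productMap β α =
      (Algebra.TensorProduct.productMap α β).comp (Algebra.TensorProduct.comm k B A).toAlgHom := by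
      ext x <;> simp
    rw [this]; rfl
  rw [TP, this]
  exact h.comp (Algebra.TensorProduct.comm k B A).bijective

lemma TP.ind (h : TP α β) {p : R → Prop} (h0 : p 0) (h1 : ∀ a b, p (α a * β b))
    (h2 : ∀ x y, p x → p y → p (x + y)) (f : R) : p f := by
  obtain ⟨f, rfl⟩ := h.2 f
  induction f using TensorProduct.induction_on with
  | zero => simpa using h0
  | tmul a b => simpa using h1 a b
  | add x y hx hy => rw [map_add]; exact h2 _ _ hx hy

lemma TP.map_map (h : TP α β) (p : A →ₗ[k] A) (q : B →ₗ[k] B) :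
    ∃ P : R →+ R, ∀ a b, P (α a * β b) = α (p a) * β (q b) := by
  let e := AlgEquiv.ofBijective _ h
  refine ⟨(e.toLinearMap ∘ₗ TensorProduct.map p q ∘ₗ e.symm.toLinearMap).toAddMonoidHom,
    fun a b => ?_⟩
  have : e.symm (α a * β b) = a ⊗ₜ b := by
    rw [AlgEquiv.symm_apply_eq]; exact (Algebra.TensorProduct.productMap_apply_tmul ..).symm
  simp only [LinearMap.toAddMonoidHom_coe, LinearMap.comp_apply, AlgEquiv.toLinearMap_apply, this,
    TensorProduct.map_tmul]
  exact Algebra.TensorProduct.productMap_apply_tmul ..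

lemma TP.functional (h : TP α β) (p : A →ₗ[k] k) (q : B →ₗ[k] k) :
    ∃ P : R →+ k, ∀ a b, P (α a * β b) = p a * q b := by
  let e := AlgEquiv.ofBijective _ h
  refine ⟨(LinearMap.mul' k k ∘ₗ TensorProduct.map p q ∘ₗ e.symm.toLinearMap).toAddMonoidHom,
    fun a b => ?_⟩
  have : e.symm (α a * β b) = a ⊗ₜ b := by
    rw [AlgEquiv.symm_apply_eq]; exact (Algebra.TensorProduct.productMap_apply_tmul ..).symm
  simp only [LinearMap.toAddMonoidHom_coe, LinearMap.comp_apply, AlgEquiv.toLinearMap_apply, this,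
    TensorProduct.map_tmul, LinearMap.mul'_apply]

lemma TP.map_ind_left (h : TP α β) {U : Ideal A} {p : R → Prop} (h0 : p 0)
    (h1 : ∀ a ∈ U, ∀ b, p (α a * β b)) (h2 : ∀ x y, p x → p y → p (x + y))
    {f : R} (hf : f ∈ Ideal.map α U) : p f := by
  suffices ∀ r, p (r * f) by simpa using this 1
  induction hf using Submodule.span_induction with
  | mem x hx =>
    obtain ⟨u, hu, rfl⟩ := hx
    intro r
    induction r using h.ind with
    | h0 => simpa using h0
    | h1 a b =>
      convert h1 (u * a) (Ideal.mul_mem_right _ _ hu) b using 1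
      rw [map_mul]; change α a * β b * α u = _; ring
    | h2 x y hx hy => rw [add_mul]; exact h2 _ _ hx hy
  | zero => intro r; simpa using h0
  | add x y _ _ hx hy => intro r; rw [mul_add]; exact h2 _ _ (hx r) (hy r)
  | smul a x _ hx => intro r; rw [smul_eq_mul, ← mul_assoc]; exact hx _

lemma TP.map_ind_right (h : TP α β) {V : Ideal B} {p : R → Prop} (h0 : p 0)
    (h1 : ∀ a, ∀ b ∈ V, p (α a * β b)) (h2 : ∀ x y, p x → p y → p (x + y))
    {f : R} (hf : f ∈ Ideal.map β V) : p f :=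
  h.symm.map_ind_left h0 (fun b hb a => by rw [mul_comm]; exact h1 a b hb) h2 hf

lemma TP.inf_le_mul (h : TP α β) (U : Ideal A) (V : Ideal B) :
    Ideal.map α U ⊓ Ideal.map β V ≤ Ideal.map α U * Ideal.map β V := by
  obtain ⟨p, hp⟩ := LinearMap.exists_leftInverse_of_injective (V.restrictScalars k).subtype
    (Submodule.ker_subtype _)
  obtain ⟨P, hP⟩ := h.map_map .id ((V.restrictScalars k).subtype ∘ₗ p)
  rintro f ⟨hU, hV⟩
  have h1 : P f = f := by
    refine h.map_ind_right (p := fun f => P f = f) (map_zero P) (fun a b hb => ?_)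
      (fun x y hx hy => by rw [map_add, hx, hy]) hV
    rw [hP]
    have := congrArg Subtype.val (LinearMap.congr_fun hp ⟨b, hb⟩)
    simp only [LinearMap.comp_apply, LinearMap.id_apply, Submodule.subtype_apply] at this ⊢
    rw [this]
  rw [← h1]
  refine h.map_ind_left (p := fun f => P f ∈ Ideal.map α U * Ideal.map β V) ?_
    (fun a ha b => ?_) (fun x y hx hy => ?_) hU
  · rw [map_zero]; exact zero_mem _
  · rw [hP]
    exact Ideal.mul_mem_mul (Ideal.mem_map_of_mem α ha) (Ideal.mem_map_of_mem β (p b).2)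
  · rw [map_add]; exact add_mem hx hy

lemma TP.inf_eq_mul (h : TP α β) (U : Ideal A) (V : Ideal B) :
    Ideal.map α U ⊓ Ideal.map β V = Ideal.map α U * Ideal.map β V :=
  le_antisymm (h.inf_le_mul U V) Ideal.mul_le_inf

/-- Division by `x` modulo `U`, as a `k`-linear map. -/
lemma exists_division (U U' : Ideal A) (x : A) (hx : ∀ a, x * a ∈ U → a ∈ U') :
    ∃ q : A →ₗ[k] A, (∀ u ∈ U, q u ∈ U') ∧ ∀ a, q (x * a) - a ∈ U' := by
  let π : A →ₗ[k] A ⧸ U := (Ideal.Quotient.mkₐ k U).toLinearMap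
  let π' : A →ₗ[k] A ⧸ U' := (Ideal.Quotient.mkₐ k U').toLinearMap
  let μ : A →ₗ[k] A ⧸ U := π ∘ₗ LinearMap.mulLeft k x
  have hπ : ∀ a, π a = 0 ↔ a ∈ U := fun a => Ideal.Quotient.eq_zero_iff_mem
  have hπ' : ∀ a, π' a = 0 ↔ a ∈ U' := fun a => Ideal.Quotient.eq_zero_iff_mem
  obtain ⟨s, hs⟩ := LinearMap.exists_rightInverse_of_surjective μ.rangeRestrict
    (LinearMap.range_rangeRestrict μ)
  obtain ⟨t, ht⟩ := LinearMap.exists_rightInverse_of_surjective π'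
    (LinearMap.range_eq_top.mpr (Ideal.Quotient.mkₐ_surjective k U'))
  obtain ⟨g, hg⟩ := LinearMap.exists_extend (π' ∘ₗ s)
  have ht' : ∀ y, π' (t y) = y := fun y => LinearMap.congr_fun ht y
  have hg' : ∀ a, g (μ a) = π' a := by
    intro a
    have h1 : g (μ a) = π' (s (μ.rangeRestrict a)) := LinearMap.congr_fun hg (μ.rangeRestrict a)
    rw [h1, ← sub_eq_zero, ← map_sub, hπ']
    apply hx
    have h2 : μ (s (μ.rangeRestrict a)) = μ a :=
      congrArg Subtype.val (LinearMap.congr_fun hs (μ.rangeRestrict a))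
    rw [← hπ]
    change μ (s (μ.rangeRestrict a) - a) = 0
    rw [map_sub, h2, sub_self]
  refine ⟨t ∘ₗ g ∘ₗ π, fun u hu => ?_, fun a => ?_⟩
  · rw [← hπ']
    simp only [LinearMap.comp_apply]
    rw [ht', (hπ u).mpr hu, map_zero]
  · rw [← hπ', map_sub]
    simp only [LinearMap.comp_apply]
    rw [ht']
    have := hg' a
    simp only [μ, LinearMap.comp_apply, LinearMap.mulLeft_apply] at this
    rw [this, sub_self]

lemma TP.colon_left (h : TP α β) {U U' : Ideal A} (V : Ideal B) {x : A}
    (hx : ∀ a, x * a ∈ U → a ∈ U') {f : R}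
    (hf : α x * f ∈ Ideal.map α U ⊔ Ideal.map β V) : f ∈ Ideal.map α U' ⊔ Ideal.map β V := by
  obtain ⟨q, hq1, hq2⟩ := exists_division (k := k) U U' x hx
  obtain ⟨P, hP⟩ := h.map_map q .id
  have h1 : ∀ f, P (α x * f) - f ∈ Ideal.map α U' := by
    intro f
    induction f using h.ind with
    | h0 => simp
    | h1 a b =>
      rw [← mul_assoc, ← map_mul, hP, LinearMap.id_apply, ← sub_mul, ← map_sub]
      exact Ideal.mul_mem_right _ _ (Ideal.mem_map_of_mem α (hq2 a))
    | h2 y z hy hz =>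
      rw [mul_add, map_add, add_sub_add_comm]
      exact add_mem hy hz
  have h2 : P (α x * f) ∈ Ideal.map α U' ⊔ Ideal.map β V := by
    obtain ⟨u, hu, v, hv, e⟩ := Submodule.mem_sup.mp hf
    rw [← e, map_add]
    refine add_mem (Ideal.mem_sup_left ?_) (Ideal.mem_sup_right ?_)
    · refine h.map_ind_left (p := fun f => P f ∈ Ideal.map α U') (by simp)
        (fun a ha b => ?_) (fun x y hx hy => ?_) hu
      · rw [hP]; exact Ideal.mul_mem_right _ _ (Ideal.mem_map_of_mem α (hq1 a ha))
      · rw [map_add]; exact add_mem hx hy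
    · refine h.map_ind_right (p := fun f => P f ∈ Ideal.map β V) (by simp)
        (fun a b hb => ?_) (fun x y hx hy => ?_) hv
      · rw [hP]; exact Ideal.mul_mem_left _ _ (Ideal.mem_map_of_mem β hb)
      · rw [map_add]; exact add_mem hx hy
  have := sub_mem h2 (Ideal.mem_sup_left (h1 f) : _ ∈ Ideal.map α U' ⊔ Ideal.map β V)
  simpa using this

lemma TP.colon_right (h : TP α β) (U : Ideal A) {V V' : Ideal B} {x : B}
    (hx : ∀ a, x * a ∈ V → a ∈ V') {f : R}
    (hf : β x * f ∈ Ideal.map α U ⊔ Ideal.map β V) : f ∈ Ideal.map α U ⊔ Ideal.map β V' := by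
  rw [sup_comm] at hf ⊢
  exact h.symm.colon_left U hx hf

/-- `UR + VR` contains no pure tensor of elements outside `U` and `V`. -/
lemma TP.mul_notMem (h : TP α β) {U : Ideal A} {V : Ideal B} {a : A} {b : B} (ha : a ∉ U)
    (hab : α a * β b ∈ Ideal.map α U ⊔ Ideal.map β V) : b ∈ V := by
  by_contra hb
  obtain ⟨p, hp, hpa⟩ := LinearMap.exists_extend_of_notMem (p := U.restrictScalars k)
    (0 : _ →ₗ[k] k) (v := a) ha 1
  obtain ⟨q, hq, hqb⟩ := LinearMap.exists_extend_of_notMem (p := V.restrictScalars k)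
    (0 : _ →ₗ[k] k) (v := b) hb 1
  obtain ⟨P, hP⟩ := h.functional p q
  obtain ⟨u, hu, v, hv, e⟩ := Submodule.mem_sup.mp hab
  have hPu : P u = 0 := h.map_ind_left (p := fun f => P f = 0) (map_zero P) (fun a ha b => by
    rw [hP, show p a = 0 from LinearMap.congr_fun hp ⟨a, ha⟩, zero_mul])
    (fun x y hx hy => by rw [map_add, hx, hy, add_zero]) hu
  have hPv : P v = 0 := h.map_ind_right (p := fun f => P f = 0) (map_zero P) (fun a b hb => by
    rw [hP, show q b = 0 from LinearMap.congr_fun hq ⟨b, hb⟩, mul_zero])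
    (fun x y hx hy => by rw [map_add, hx, hy, add_zero]) hv
  have := hP a b
  rw [← e, map_add, hPu, hPv, hpa, hqb] at this
  simp at this

end TensorStructure

lemma tp_rename {k : Type*} [Field k] {σ τ : Type*} :
    TP (rename Sum.inl : MvPolynomial σ k →ₐ[k] MvPolynomial (σ ⊕ τ) k)
      (rename Sum.inr : MvPolynomial τ k →ₐ[k] MvPolynomial (σ ⊕ τ) k) := by
  have : Algebra.TensorProduct.productMap
      (rename Sum.inl : MvPolynomial σ k →ₐ[k] MvPolynomial (σ ⊕ τ) k)
      (rename Sum.inr : MvPolynomial τ k →ₐ[k] MvPolynomial (σ ⊕ τ) k) =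
      (tensorEquivSum k σ τ k).toAlgHom := by
    ext x <;> simp
  rw [TP, this]
  exact (tensorEquivSum k σ τ k).bijective

/-! ### Depth and projective dimension in disjoint sets of variables -/

section DepthSum

variable {k : Type*} [Field k] [CharZero k] {σ τ : Type*}

/-- The inclusion `k[X] → k[X, Y]`. -/
noncomputable abbrev incl (k σ τ : Type*) [Field k] :
    MvPolynomial σ k →ₐ[k] MvPolynomial (σ ⊕ τ) k := rename Sum.inl

/-- The inclusion `k[Y] → k[X, Y]`. -/
noncomputable abbrev incr (k σ τ : Type*) [Field k] :
    MvPolynomial τ k →ₐ[k] MvPolynomial (σ ⊕ τ) k := rename Sum.inr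

lemma tp : TP (incl k σ τ) (incr k σ τ) := tp_rename

lemma map_incl_le {U : Ideal (MvPolynomial σ k)} (hU : U ≤ maxHomIdeal k σ) :
    Ideal.map (incl k σ τ) U ≤ maxHomIdeal k (σ ⊕ τ) := by
  refine (Ideal.map_mono hU).trans ?_
  rw [maxHomIdeal, Ideal.map_span, Ideal.span_le]
  rintro _ ⟨_, ⟨i, rfl⟩, rfl⟩
  rw [rename_X]
  exact Ideal.subset_span ⟨_, rfl⟩

lemma map_incr_le {V : Ideal (MvPolynomial τ k)} (hV : V ≤ maxHomIdeal k τ) :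
    Ideal.map (incr k σ τ) V ≤ maxHomIdeal k (σ ⊕ τ) := by
  refine (Ideal.map_mono hV).trans ?_
  rw [maxHomIdeal, Ideal.map_span, Ideal.span_le]
  rintro _ ⟨_, ⟨i, rfl⟩, rfl⟩
  rw [rename_X]
  exact Ideal.subset_span ⟨_, rfl⟩

lemma mem_incl_max {a : MvPolynomial σ k} (ha : a ∈ maxHomIdeal k σ) :
    incl k σ τ a ∈ maxHomIdeal k (σ ⊕ τ) :=
  map_incl_le le_rfl (Ideal.mem_map_of_mem _ ha)

lemma mem_incr_max {a : MvPolynomial τ k} (ha : a ∈ maxHomIdeal k τ) :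
    incr k σ τ a ∈ maxHomIdeal k (σ ⊕ τ) :=
  map_incr_le le_rfl (Ideal.mem_map_of_mem _ ha)

lemma Reach.left {U U' : Ideal (MvPolynomial σ k)} {n : ℕ} (h : Reach U n U')
    (V : Ideal (MvPolynomial τ k)) :
    Reach (Ideal.map (incl k σ τ) U ⊔ Ideal.map (incr k σ τ) V) n
      (Ideal.map (incl k σ τ) U' ⊔ Ideal.map (incr k σ τ) V) := by
  induction h with
  | refl => exact .refl _
  | @step U U' a n ha hreg _ ih =>
    refine .step (mem_incl_max ha) (fun y hy => tp.colon_left V hreg hy) ?_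
    convert ih using 1
    rw [Ideal.map_sup, Ideal.map_span, Set.image_singleton, sup_right_comm]

lemma Reach.right {V V' : Ideal (MvPolynomial τ k)} {n : ℕ} (h : Reach V n V')
    (U : Ideal (MvPolynomial σ k)) :
    Reach (Ideal.map (incl k σ τ) U ⊔ Ideal.map (incr k σ τ) V) n
      (Ideal.map (incl k σ τ) U ⊔ Ideal.map (incr k σ τ) V') := by
  induction h with
  | refl => exact .refl _
  | @step V V' a n ha hreg _ ih =>
    refine .step (mem_incr_max ha) (fun y hy => tp.colon_right U hreg hy) ?_
    convert ih using 1
    rw [Ideal.map_sup, Ideal.map_span, Set.image_singleton, sup_assoc]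

lemma Soc.sup {U : Ideal (MvPolynomial σ k)} {V : Ideal (MvPolynomial τ k)} (hU : Soc U)
    (hV : Soc V) : Soc (Ideal.map (incl k σ τ) U ⊔ Ideal.map (incr k σ τ) V) := by
  obtain ⟨u, hu, hu'⟩ := hU
  obtain ⟨v, hv, hv'⟩ := hV
  refine ⟨incl k σ τ u * incr k σ τ v, fun h => hv (tp.mul_notMem hu h), ?_⟩
  rintro (i | i)
  · rw [← mul_assoc, ← rename_X, ← map_mul]
    exact Ideal.mem_sup_left (Ideal.mul_mem_right _ _ (Ideal.mem_map_of_mem _ (hu' i)))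
  · rw [mul_left_comm, ← rename_X, ← map_mul]
    exact Ideal.mem_sup_right (Ideal.mul_mem_left _ _ (Ideal.mem_map_of_mem _ (hv' i)))

variable [Fintype σ] [Fintype τ] [LinearOrder σ] [LinearOrder τ] [LinearOrder (σ ⊕ τ)]

lemma depth_sup {U : Ideal (MvPolynomial σ k)} {V : Ideal (MvPolynomial τ k)}
    (hU : U ≤ maxHomIdeal k σ) (hV : V ≤ maxHomIdeal k τ) :
    idealDepth (maxHomIdeal k (σ ⊕ τ))
      (MvPolynomial (σ ⊕ τ) k ⧸ Ideal.map (incl k σ τ) U ⊔ Ideal.map (incr k σ τ) V) =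
    idealDepth (maxHomIdeal k σ) (MvPolynomial σ k ⧸ U) +
      idealDepth (maxHomIdeal k τ) (MvPolynomial τ k ⧸ V) := by
  obtain ⟨n, U', h1, h2⟩ := exists_reach_soc U hU
  obtain ⟨m, V', h3, h4⟩ := exists_reach_soc V hV
  rw [depth_eq_of_reach h1 hU h2, depth_eq_of_reach h3 hV h4]
  exact depth_eq_of_reach ((h1.left V).trans (h3.right U')) (sup_le (map_incl_le hU)
    (map_incr_le hV)) (h2.sup h4)

lemma depth_incl {U : Ideal (MvPolynomial σ k)} (hU : U ≤ maxHomIdeal k σ) :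
    idealDepth (maxHomIdeal k (σ ⊕ τ)) (MvPolynomial (σ ⊕ τ) k ⧸ Ideal.map (incl k σ τ) U) =
    idealDepth (maxHomIdeal k σ) (MvPolynomial σ k ⧸ U) + Fintype.card τ := by
  have := depth_sup (k := k) (τ := τ) hU bot_le
  rwa [depth_bot, Ideal.map_bot, sup_bot_eq] at this

lemma depth_incr {V : Ideal (MvPolynomial τ k)} (hV : V ≤ maxHomIdeal k τ) :
    idealDepth (maxHomIdeal k (σ ⊕ τ)) (MvPolynomial (σ ⊕ τ) k ⧸ Ideal.map (incr k σ τ) V) =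
    Fintype.card σ + idealDepth (maxHomIdeal k τ) (MvPolynomial τ k ⧸ V) := by
  have := depth_sup (k := k) (σ := σ) bot_le hV
  rwa [depth_bot, Ideal.map_bot, bot_sup_eq] at this

/-- The projective dimension of `U ⊆ k[X]` does not change in `k[X, Y]`. -/
lemma PD.incl {U : Ideal (MvPolynomial σ k)} (hU : U ≤ maxHomIdeal k σ) (hU0 : U ≠ ⊥) {d : ℕ}
    (h : PD U d) : PD (Ideal.map (incl k σ τ) U) d := by
  obtain ⟨e, he⟩ := exists_PD (Q := Ideal.map (_root_.incl k σ τ) U) (fun h0 => hU0 (by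
    rwa [Ideal.map_eq_bot_iff_of_injective (rename_injective _ Sum.inl_injective)] at h0))
    (map_incl_le hU)
  have h1 := he.add_depth (map_incl_le hU)
  have h2 := h.add_depth hU
  rw [depth_incl hU, Fintype.card_sum] at h1
  obtain rfl : e = d := by omega
  exact he

lemma PD.incr {V : Ideal (MvPolynomial τ k)} (hV : V ≤ maxHomIdeal k τ) (hV0 : V ≠ ⊥) {d : ℕ}
    (h : PD V d) : PD (Ideal.map (incr k σ τ) V) d := by
  obtain ⟨e, he⟩ := exists_PD (Q := Ideal.map (_root_.incr k σ τ) V) (fun h0 => hV0 (by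
    rwa [Ideal.map_eq_bot_iff_of_injective (rename_injective _ Sum.inr_injective)] at h0))
    (map_incr_le hV)
  have h1 := he.add_depth (map_incr_le hV)
  have h2 := h.add_depth hV
  rw [depth_incr hV, Fintype.card_sum] at h1
  obtain rfl : e = d := by omega
  exact he

lemma PD.incl_sup_incr {U : Ideal (MvPolynomial σ k)} {V : Ideal (MvPolynomial τ k)}
    (hU : U ≤ maxHomIdeal k σ) (hV : V ≤ maxHomIdeal k τ) (hU0 : U ≠ ⊥) {d e : ℕ}
    (h : PD U d) (h' : PD V e) :
    PD (Ideal.map (_root_.incl k σ τ) U ⊔ Ideal.map (_root_.incr k σ τ) V) (d + e + 1) := by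
  have hle := sup_le (map_incl_le (τ := τ) hU) (map_incr_le (σ := σ) hV)
  obtain ⟨c, hc⟩ := exists_PD (Q := Ideal.map (_root_.incl k σ τ) U ⊔
    Ideal.map (_root_.incr k σ τ) V) (fun h0 => hU0 (by
    have := (sup_eq_bot_iff.mp h0).1
    rwa [Ideal.map_eq_bot_iff_of_injective (rename_injective _ Sum.inl_injective)] at this)) hle
  have h1 := hc.add_depth hle
  have h2 := h.add_depth hU
  have h3 := h'.add_depth hV
  rw [depth_sup hU hV, Fintype.card_sum] at h1
  obtain rfl : c = d + e + 1 := by omega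
  exact hc

/-- The projective dimension of `UR ∩ VR = UR · VR`. -/
lemma PD.incl_inf_incr {U : Ideal (MvPolynomial σ k)} {V : Ideal (MvPolynomial τ k)}
    (hU : U ≤ maxHomIdeal k σ) (hV : V ≤ maxHomIdeal k τ) (hU0 : U ≠ ⊥) (hV0 : V ≠ ⊥) {d e : ℕ}
    (h : PD U d) (h' : PD V e) :
    PD (Ideal.map (_root_.incl k σ τ) U ⊓ Ideal.map (_root_.incr k σ τ) V) (d + e) :=
  (h.incl hU hU0).inf (h'.incr hV hV0) (h.incl_sup_incr hU hV hU0 h')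

end DepthSum

/-! ### Symbolic powers and derivations -/

section SymbPow

variable {S : Type*} [CommRing S]

lemma mem_symbPow {Q : Ideal S} {n : ℕ} {f : S} :
    f ∈ symbPow Q n ↔ ∀ P ∈ Q.minimalPrimes, ∃ s ∉ P, s * f ∈ Q ^ n := by
  rw [symbPow, Submodule.mem_iInf]
  refine forall_congr' fun P => ?_
  rw [Submodule.mem_iInf]
  refine forall_congr' fun hP => ?_
  have : P.IsPrime := hP.1.1
  rw [Ideal.mem_comap, IsLocalization.algebraMap_mem_map_algebraMap_iff P.primeCompl]
  rfl

lemma symbPow_zero (Q : Ideal S) : symbPow Q 0 = ⊤ := by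
  rw [Ideal.eq_top_iff_one, mem_symbPow]
  exact fun P hP => ⟨1, fun h => hP.1.1.ne_top (P.eq_top_of_isUnit_mem h isUnit_one), by simp⟩

lemma pow_le_symbPow (Q : Ideal S) (n : ℕ) : Q ^ n ≤ symbPow Q n := fun f hf =>
  mem_symbPow.mpr fun P hP => ⟨1, fun h => hP.1.1.ne_top (P.eq_top_of_isUnit_mem h isUnit_one),
    by simpa using hf⟩

lemma symbPow_anti (Q : Ideal S) : Antitone (symbPow Q) := fun n m h f hf =>
  mem_symbPow.mpr fun P hP => by
    obtain ⟨s, hs, hsf⟩ := mem_symbPow.mp hf P hP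
    exact ⟨s, hs, Ideal.pow_le_pow_right h hsf⟩

lemma symbPow_le_of_mem_minimalPrimes {Q P : Ideal S} (hP : P ∈ Q.minimalPrimes) {n : ℕ}
    (hn : 1 ≤ n) : symbPow Q n ≤ P := by
  intro f hf
  obtain ⟨s, hs, hsf⟩ := mem_symbPow.mp hf P hP
  have := hP.1.1
  exact (this.mem_or_mem (hP.1.2 (Ideal.pow_le_self (by omega) hsf))).resolve_left hs

lemma symbPow_le_of_le {Q M : Ideal S} [M.IsPrime] (h : Q ≤ M) {n : ℕ}
    (hn : 1 ≤ n) : symbPow Q n ≤ M := by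
  obtain ⟨P, hP, hPM⟩ := Ideal.exists_minimalPrimes_le h
  exact (symbPow_le_of_mem_minimalPrimes hP hn).trans hPM

lemma symbPow_ne_bot [IsDomain S] {Q : Ideal S} (h : Q ≠ ⊥) (n : ℕ) : symbPow Q n ≠ ⊥ :=
  fun h0 => pow_ne_zero n h (le_bot_iff.mp (h0 ▸ pow_le_symbPow Q n))

/-- A single element outside all minimal primes that multiplies `f` into `Q ^ n`. -/
lemma exists_forall_notMem_of_mem_symbPow [IsNoetherianRing S] {Q : Ideal S} {n : ℕ} {f : S}
    (hf : f ∈ symbPow Q n) : ∃ w, (∀ P ∈ Q.minimalPrimes, w ∉ P) ∧ w * f ∈ Q ^ n := by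
  by_contra! h
  have hsub : ((Q ^ n).colon {f} : Set S) ⊆ ⋃ P ∈ Q.minimalPrimes, (P : Set S) := by
    intro w hw
    rw [SetLike.mem_coe, Submodule.mem_colon_singleton] at hw
    by_contra hw'
    simp only [Set.mem_iUnion, not_exists] at hw'
    exact h w hw' hw
  obtain ⟨P, hP, hle⟩ := (Ideal.subset_union_prime_finite
    (Q.finite_minimalPrimes_of_isNoetherianRing S) (f := fun p => p) ⊤ ⊤
    (fun p hp _ _ => hp.1.1)).mp hsub
  obtain ⟨s, hs, hsf⟩ := mem_symbPow.mp hf P hP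
  exact hs (hle (Submodule.mem_colon_singleton.mpr hsf))

variable {k : Type*} [CommRing k] [Algebra k S]

lemma deriv_mul_mem (D : Derivation k S S) {Q₁ Q₁' Q₂ Q₂' : Ideal S}
    (h1 : ∀ f ∈ Q₁, D f ∈ Q₁') (h2 : ∀ f ∈ Q₂, D f ∈ Q₂') {Q : Ideal S} (h_12 : Q₁ * Q₂' ≤ Q)
    (h_21 : Q₁' * Q₂ ≤ Q) {f : S} (hf : f ∈ Q₁ * Q₂) : D f ∈ Q := by
  induction hf using Submodule.mul_induction_on' with
  | mem_mul_mem a ha b hb =>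
    rw [D.leibniz]
    refine add_mem (h_12 (Ideal.mul_mem_mul ha (h2 b hb))) (h_21 ?_)
    rw [smul_eq_mul, mul_comm b]
    exact Ideal.mul_mem_mul (h1 a ha) hb
  | add x _ y _ hx hy => rw [map_add]; exact add_mem hx hy

lemma deriv_pow_succ_mem (D : Derivation k S S) (Q : Ideal S) (n : ℕ) :
    ∀ f ∈ Q ^ (n + 1), D f ∈ Q ^ n := by
  induction n with
  | zero => simp
  | succ n ih =>
    intro f hf
    rw [pow_succ] at hf
    exact deriv_mul_mem D ih (Q₂' := ⊤) (by simp) (by simp) (pow_succ Q n).ge hf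

lemma deriv_pow_mem (D : Derivation k S S) {Q : Ideal S} (hD : ∀ f ∈ Q, D f ∈ Q) (n : ℕ) :
    ∀ f ∈ Q ^ n, D f ∈ Q ^ n := by
  induction n with
  | zero => simp
  | succ n ih =>
    intro f hf
    rw [pow_succ] at hf ⊢
    exact deriv_mul_mem D ih hD le_rfl le_rfl hf

lemma deriv_symbPow_mem (D : Derivation k S S) {Q : Ideal S} {n m : ℕ} (hnm : m ≤ n)
    (hD : ∀ f ∈ Q ^ n, D f ∈ Q ^ m) : ∀ f ∈ symbPow Q n, D f ∈ symbPow Q m := by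
  intro f hf
  refine mem_symbPow.mpr fun P hP => ?_
  have := hP.1.1
  obtain ⟨s, hs, hsf⟩ := mem_symbPow.mp hf P hP
  refine ⟨s * s, fun h => ((this.mem_or_mem h).elim hs hs), ?_⟩
  have h1 : s * s * D f = s * D (s * f) - (s * f) * D s := by
    rw [D.leibniz, smul_eq_mul, smul_eq_mul]; ring
  rw [h1]
  exact sub_mem (Ideal.mul_mem_left _ _ (hD _ hsf))
    (Ideal.mul_mem_right _ _ (Ideal.pow_le_pow_right hnm hsf))

lemma deriv_map_mem {A F : Type*} [CommRing A] [FunLike F A S] [RingHomClass F A S] (α : F)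
    (D : Derivation k S S) {U U' : Ideal A} (hle : U ≤ U')
    (h : ∀ a ∈ U, D (α a) ∈ Ideal.map α U') : ∀ f ∈ Ideal.map α U, D f ∈ Ideal.map α U' := by
  intro f hf
  induction hf using Submodule.span_induction with
  | mem x hx => obtain ⟨a, ha, rfl⟩ := hx; exact h a ha
  | zero => simp
  | add x y _ _ hx hy => rw [map_add]; exact add_mem hx hy
  | smul a x hx hx' =>
    rw [smul_eq_mul, D.leibniz]
    exact add_mem (Ideal.mul_mem_left _ _ hx')
      (Ideal.mul_mem_right _ _ (Ideal.map_mono hle hx))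

end SymbPow

section Homog

variable {k : Type*} [Field k] {σ : Type*} [Fintype σ]

lemma euler_mem {I : Ideal (MvPolynomial σ k)} (hI : IsHomogeneousIdeal I) :
    ∀ f ∈ I, euler Finset.univ f ∈ I := by
  intro f hf
  have : euler Finset.univ f = ∑ d ∈ Finset.range (f.totalDegree + 1),
      (d : MvPolynomial σ k) * homogeneousComponent d f := by
    conv_lhs => rw [← sum_homogeneousComponent f]
    rw [map_sum]
    refine Finset.sum_congr rfl fun d _ => ?_
    rw [euler_apply, (homogeneousComponent_isHomogeneous d f).sum_X_mul_pderiv, nsmul_eq_mul]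
  rw [this]
  exact sum_mem fun d _ => Ideal.mul_mem_left _ _ (hI f hf d)

omit [Fintype σ] in
lemma le_maxHomIdeal {I : Ideal (MvPolynomial σ k)} (hI : IsHomogeneousIdeal I) (h : I ≠ ⊤) :
    I ≤ maxHomIdeal k σ := by
  intro f hf
  rw [maxHomIdeal, ← Set.image_univ, mem_ideal_span_X_image]
  intro m hm
  by_contra! h0
  obtain rfl : m = 0 := by ext i; exact h0 i (Set.mem_univ i)
  have h1 := hI f hf 0
  rw [homogeneousComponent_zero] at h1
  refine h (Ideal.eq_top_of_isUnit_mem _ h1 ?_)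
  exact (IsUnit.mk0 _ (mem_support_iff.mp hm)).map C

end Homog

/-! ### Reducedness of tensor products in characteristic zero -/

section Reduced

variable {k A B : Type*} [Field k] [CharZero k] [CommRing A] [CommRing B]
  [Algebra k A] [Algebra k B]

lemma isReduced_finite_tensor (κ : Type*) [Field κ] [Algebra k κ] [Module.Finite k κ]
    [IsDomain B] : IsReduced (κ ⊗[k] B) := by
  let L := FractionRing B
  have : Algebra.FormallyUnramified k κ := Algebra.FormallyUnramified.of_isSeparable k κ
  have : IsReduced (L ⊗[k] κ) := Algebra.FormallyUnramified.isReduced_of_field L (L ⊗[k] κ)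
  let f : B →ₐ[k] L := IsScalarTower.toAlgHom k B L
  have hf : Function.Injective f := IsFractionRing.injective B L
  have h1 : Function.Injective (Algebra.TensorProduct.map f (AlgHom.id k κ)) :=
    Module.Flat.rTensor_preserves_injective_linearMap (M := κ) f.toLinearMap hf
  have h2 : IsReduced (B ⊗[k] κ) := isReduced_of_injective _ h1
  exact isReduced_of_injective _ (Algebra.TensorProduct.comm k κ B).injective

/-- In characteristic zero, the tensor product of two domains, one of them of finite type, is
reduced: a nilpotent element vanishes at each closed point of `Spec A`, because residue fields
there are finite separable extensions of `k`, and these points are dense. -/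
lemma isReduced_tensor [Algebra.FiniteType k A] [IsDomain A] [IsDomain B] :
    IsReduced (A ⊗[k] B) := by
  refine ⟨fun z hz => ?_⟩
  classical
  let b := Module.Basis.ofVectorSpace k B
  let e := TensorProduct.equivFinsuppOfBasisRight (M := A) b
  rw [← e.map_eq_zero_iff]
  ext i
  rw [Finsupp.zero_apply]
  have : IsJacobsonRing A := isJacobsonRing_of_finiteType (A := k)
  have hj : (⊥ : Ideal A).jacobson = ⊥ :=
    IsJacobsonRing.out inferInstance (Ideal.IsPrime.isRadical Ideal.isPrime_bot)
  rw [← Ideal.mem_bot, ← hj, Ideal.jacobson,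
    Ideal.mem_sInf]
  rintro M ⟨-, hM⟩
  let _ := Ideal.Quotient.field M
  have : Module.Finite k (A ⧸ M) := finite_of_finite_type_of_isJacobsonRing k (A ⧸ M)
  have := isReduced_finite_tensor (k := k) (B := B) (A ⧸ M)
  let π := Ideal.Quotient.mkₐ k M
  have h0 : Algebra.TensorProduct.map π (AlgHom.id k B) z = 0 := (hz.map _).eq_zero
  let e' := TensorProduct.equivFinsuppOfBasisRight (M := A ⧸ M) b
  have hnat : ∀ z, e' (Algebra.TensorProduct.map π (AlgHom.id k B) z) i = π (e z i) := by
    intro z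
    induction z using TensorProduct.induction_on with
    | zero => simp
    | tmul x y =>
      simp [e, e']
    | add x y hx hy => simp only [map_add, Finsupp.add_apply, hx, hy]
  have := hnat z
  rw [h0, map_zero, Finsupp.zero_apply] at this
  exact Ideal.Quotient.eq_zero_iff_mem.mp this.symm

/-- Sums of prime ideals in separate variables are radical in characteristic zero. -/
lemma TP.isRadical {R : Type*} [CommRing R] [Algebra k R] {α : A →ₐ[k] R} {β : B →ₐ[k] R}
    (h : TP α β) [Algebra.FiniteType k A] {P : Ideal A} {P' : Ideal B} [P.IsPrime] [P'.IsPrime] :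
    (Ideal.map α P ⊔ Ideal.map β P').IsRadical := by
  have : IsReduced ((A ⧸ P) ⊗[k] (B ⧸ P')) := isReduced_tensor
  let e := Algebra.TensorProduct.productMap α β
  let φ := Algebra.TensorProduct.map (Ideal.Quotient.mkₐ k P) (Ideal.Quotient.mkₐ k P')
  have hk : RingHom.ker φ = _ := Algebra.TensorProduct.map_ker _ _
    (Ideal.Quotient.mkₐ_surjective k P) (Ideal.Quotient.mkₐ_surjective k P')
  have hP : RingHom.ker (Ideal.Quotient.mkₐ k P) = P := Ideal.Quotient.mkₐ_ker k P
  have hP' : RingHom.ker (Ideal.Quotient.mkₐ k P') = P' := Ideal.Quotient.mkₐ_ker k P'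
  rw [hP, hP'] at hk
  have h1 : Ideal.map e (RingHom.ker φ) = Ideal.map α P ⊔ Ideal.map β P' := by
    rw [hk, Ideal.map_sup, Ideal.map_mapₐ, Ideal.map_mapₐ,
      Algebra.TensorProduct.productMap_left, Algebra.TensorProduct.productMap_right]
  rw [← h1]
  intro x ⟨n, hn⟩
  obtain ⟨y, rfl⟩ := h.2 x
  rw [← map_pow] at hn
  have h2 : ∀ y, e y ∈ Ideal.map e (RingHom.ker φ) ↔ y ∈ RingHom.ker φ := by
    intro y
    rw [Ideal.mem_map_iff_of_surjective _ h.2]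
    exact ⟨fun ⟨x, hx, he⟩ => h.1 he ▸ hx, fun h => ⟨y, h, rfl⟩⟩
  rw [h2] at hn ⊢
  rw [RingHom.mem_ker, map_pow] at hn
  exact eq_zero_of_pow_eq_zero hn

end Reduced

/-! ### The binomial theorem for symbolic powers -/

section Binomial

variable {k A B R : Type*} [Field k] [CommRing A] [CommRing B] [CommRing R]
  [Algebra k A] [Algebra k B] [Algebra k R]
  {α : A →ₐ[k] R} {β : B →ₐ[k] R}

lemma TP.comap_left (h : TP α β) {P : Ideal A} [P.IsPrime] {V : Ideal B} {p : Ideal R}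
    (hp : p ∈ (Ideal.map α P ⊔ Ideal.map β V).minimalPrimes) : Ideal.comap α p = P := by
  refine le_antisymm (fun x hx => ?_) (Ideal.map_le_iff_le_comap.mp (le_sup_left.trans hp.1.2))
  by_contra hxP
  obtain ⟨y, hy, hxy⟩ := Ideal.exists_mul_mem_of_mem_minimalPrimes hp (Ideal.mem_comap.mp hx)
  exact hy (h.colon_left V (fun a ha => (‹P.IsPrime›.mem_or_mem ha).resolve_left hxP) hxy)

lemma TP.comap_right (h : TP α β) {U : Ideal A} {P' : Ideal B} [P'.IsPrime] {p : Ideal R}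
    (hp : p ∈ (Ideal.map α U ⊔ Ideal.map β P').minimalPrimes) : Ideal.comap β p = P' :=
  h.symm.comap_left (by rwa [sup_comm] at hp)

lemma TP.mem_minimalPrimes (h : TP α β) {I P : Ideal A} {J P' : Ideal B}
    (hP : P ∈ I.minimalPrimes) (hP' : P' ∈ J.minimalPrimes) {p : Ideal R}
    (hp : p ∈ (Ideal.map α P ⊔ Ideal.map β P').minimalPrimes) :
    p ∈ (Ideal.map α I ⊔ Ideal.map β J).minimalPrimes := by
  have := hP.1.1
  have := hP'.1.1
  refine ⟨⟨hp.1.1, (sup_le_sup (Ideal.map_mono hP.1.2) (Ideal.map_mono hP'.1.2)).trans hp.1.2⟩,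
    fun q ⟨hq, hLq⟩ hqp => hp.2 ⟨hq, sup_le ?_ ?_⟩ hqp⟩
  · rw [Ideal.map_le_iff_le_comap]
    refine hP.2 ⟨hq.comap α, Ideal.map_le_iff_le_comap.mp (le_sup_left.trans hLq)⟩ ?_
    rw [← h.comap_left hp]
    exact Ideal.comap_mono hqp
  · rw [Ideal.map_le_iff_le_comap]
    refine hP'.2 ⟨hq.comap β, Ideal.map_le_iff_le_comap.mp (le_sup_right.trans hLq)⟩ ?_
    rw [← h.comap_right hp]
    exact Ideal.comap_mono hqp

/-- Since `PR + P'R` is radical, an element outside the minimal primes of `IR + JR` is a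
nonzerodivisor modulo it. -/
lemma TP.mem_of_mul_mem [CharZero k] [Algebra.FiniteType k A] (h : TP α β) {I P : Ideal A}
    {J P' : Ideal B} (hP : P ∈ I.minimalPrimes) (hP' : P' ∈ J.minimalPrimes) {w : R}
    (hw : ∀ p ∈ (Ideal.map α I ⊔ Ideal.map β J).minimalPrimes, w ∉ p) {g : R}
    (hg : w * g ∈ Ideal.map α P ⊔ Ideal.map β P') : g ∈ Ideal.map α P ⊔ Ideal.map β P' := by
  have := hP.1.1
  have := hP'.1.1
  rw [← (h.isRadical (P := P) (P' := P')).radical, ← Ideal.sInf_minimalPrimes, Ideal.mem_sInf]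
  intro p hp
  exact (hp.1.1.mem_or_mem (hp.1.2 hg)).resolve_left (hw p (h.mem_minimalPrimes hP hP' hp))

/-- `U` is saturated with respect to the elements outside the minimal primes of `I`. -/
def Sat (I U : Ideal A) : Prop :=
  ∀ x, (∀ P ∈ I.minimalPrimes, x ∉ P) → ∀ a, x * a ∈ U → a ∈ U

/-- The elements outside all minimal primes of `I`. -/
def good (I : Ideal A) : Submonoid A where
  carrier := {x | ∀ P ∈ I.minimalPrimes, x ∉ P}
  one_mem' P hP h := hP.1.1.ne_top (P.eq_top_of_isUnit_mem h isUnit_one)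
  mul_mem' hx hy P hP h := (hP.1.1.mem_or_mem h).elim (hx P hP) (hy P hP)

/-- The saturation of `U` with respect to the elements outside the minimal primes of `I`. -/
def satur (I U : Ideal A) : Ideal A where
  carrier := {a | ∃ x ∈ good I, x * a ∈ U}
  zero_mem' := ⟨1, one_mem _, by simp⟩
  add_mem' := by
    rintro a b ⟨x, hx, hxa⟩ ⟨y, hy, hyb⟩
    refine ⟨x * y, mul_mem hx hy, ?_⟩
    rw [mul_add]
    refine add_mem ?_ ?_
    · convert Ideal.mul_mem_left U y hxa using 1; ring
    · convert Ideal.mul_mem_left U x hyb using 1; ring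
  smul_mem' := by
    rintro c a ⟨x, hx, hxa⟩
    refine ⟨x, hx, ?_⟩
    convert Ideal.mul_mem_left U c hxa using 1
    rw [smul_eq_mul]; ring

lemma le_satur (I U : Ideal A) : U ≤ satur I U := fun a ha => ⟨1, one_mem _, by simpa using ha⟩

lemma sat_satur (I U : Ideal A) : Sat I (satur I U) := by
  rintro x hx a ⟨y, hy, h⟩
  exact ⟨y * x, mul_mem hy hx, by rwa [mul_assoc]⟩

lemma sat_symbPow [IsNoetherianRing A] (I : Ideal A) (n : ℕ) : Sat I (symbPow I n) := by
  intro x hx a ha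
  refine mem_symbPow.mpr fun P hP => ?_
  obtain ⟨s, hs, h⟩ := mem_symbPow.mp ha P hP
  have := hP.1.1
  exact ⟨s * x, fun h => (this.mem_or_mem h).elim hs (hx P hP), by rwa [mul_assoc]⟩

lemma exists_good_mul_mem {I U : Ideal A} {N : Ideal R} {f : R}
    (hf : f ∈ Ideal.map α (satur I U) ⊔ N) : ∃ x ∈ good I, α x * f ∈ Ideal.map α U ⊔ N := by
  obtain ⟨u, hu, v, hv, rfl⟩ := Submodule.mem_sup.mp hf
  suffices ∃ x ∈ good I, α x * u ∈ Ideal.map α U by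
    obtain ⟨x, hx, h⟩ := this
    refine ⟨x, hx, ?_⟩
    rw [mul_add]
    exact add_mem (Ideal.mem_sup_left h) (Ideal.mem_sup_right (Ideal.mul_mem_left _ _ hv))
  clear hf hv
  induction hu using Submodule.span_induction with
  | mem u hu =>
    obtain ⟨a, ⟨x, hx, hxa⟩, rfl⟩ := hu
    exact ⟨x, hx, by rw [← map_mul]; exact Ideal.mem_map_of_mem α hxa⟩
  | zero => exact ⟨1, one_mem _, by simp⟩
  | add u v _ _ hu hv =>
    obtain ⟨x, hx, hxu⟩ := hu
    obtain ⟨y, hy, hyv⟩ := hv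
    refine ⟨x * y, mul_mem hx hy, ?_⟩
    rw [mul_add, map_mul]
    refine add_mem ?_ ?_
    · convert Ideal.mul_mem_left _ (α y) hxu using 1; ring
    · convert Ideal.mul_mem_left _ (α x) hyv using 1; ring
  | smul c u _ hu =>
    obtain ⟨x, hx, hxu⟩ := hu
    refine ⟨x, hx, ?_⟩
    convert Ideal.mul_mem_left _ c hxu using 1
    rw [smul_eq_mul]; ring

/-- A proper saturated ideal containing a power of `I` has a minimal prime of `I` as an
associated prime. -/
lemma exists_colon_minimalPrime [IsNoetherianRing A] {I U : Ideal A} {n : ℕ} (hIU : I ^ n ≤ U)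
    (hU : Sat I U) (hU1 : U ≠ ⊤) :
    ∃ x ∉ U, ∃ P ∈ I.minimalPrimes, ∀ a, a ∈ P ↔ x * a ∈ U := by
  have : Nontrivial (A ⧸ U) := Ideal.Quotient.nontrivial_iff.mpr hU1
  obtain ⟨P, hP⟩ := associatedPrimes.nonempty A (A ⧸ U)
  obtain ⟨hPp, y, hy⟩ := isAssociatedPrime_iff.mp hP
  obtain ⟨x, rfl⟩ := Ideal.Quotient.mk_surjective y
  have hmem : ∀ a, a ∈ P ↔ x * a ∈ U := by
    intro a
    rw [hy, Submodule.mem_colon_singleton, Submodule.mem_bot, ← Ideal.Quotient.eq_zero_iff_mem,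
      mul_comm, map_mul]
    rfl
  have hx : x ∉ U := fun hx => hPp.ne_top ((Ideal.eq_top_iff_one _).mpr
    ((hmem 1).mpr (by simpa using hx)))
  have hIP : I ≤ P := Ideal.IsPrime.le_of_pow_le (n := n)
    (fun a ha => (hmem a).mpr (Ideal.mul_mem_left _ _ (hIU ha)))
  have hsub : (P : Set A) ⊆ ⋃ q ∈ I.minimalPrimes, (q : Set A) := by
    intro a ha
    by_contra ha'
    simp only [Set.mem_iUnion, not_exists] at ha'
    exact hx (hU a ha' x (by rw [mul_comm]; exact (hmem a).mp ha))
  obtain ⟨q, hq, hle⟩ := (Ideal.subset_union_prime_finite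
    (I.finite_minimalPrimes_of_isNoetherianRing A) (f := fun p => p) ⊤ ⊤
    (fun p hp _ _ => hp.1.1)).mp hsub
  obtain rfl : P = q := le_antisymm hle (hq.2 ⟨hPp, hIP⟩ hle)
  exact ⟨x, hx, P, hq, hmem⟩

/-- A saturated ideal containing a power of `I` has a filtration with factors torsion-free over
the `A / P`, `P` a minimal prime of `I`; nonzerodivisors on `R / (PR + VR)` are nonzerodivisors on
`R / (UR + VR)`. -/
lemma TP.filtration [IsNoetherianRing A] (h : TP α β) {I : Ideal A} {V : Ideal B} {w : R}
    (hw : ∀ P ∈ I.minimalPrimes, ∀ f, w * f ∈ Ideal.map α P ⊔ Ideal.map β V →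
      f ∈ Ideal.map α P ⊔ Ideal.map β V) {n : ℕ} (U : Ideal A) (hIU : I ^ n ≤ U) (hU : Sat I U)
    (f : R) (hf : w * f ∈ Ideal.map α U ⊔ Ideal.map β V) : f ∈ Ideal.map α U ⊔ Ideal.map β V := by
  induction U using IsNoetherian.induction generalizing f with
  | hgt U ih =>
  by_cases hU1 : U = ⊤
  · simp [hU1, Ideal.map_top]
  obtain ⟨x, hx, P, hP, hmem⟩ := exists_colon_minimalPrime hIU hU hU1
  have hle : U ≤ satur I (Ideal.span {x} ⊔ U) := le_sup_right.trans (le_satur _ _)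
  have hlt : U < satur I (Ideal.span {x} ⊔ U) := lt_of_le_of_ne hle fun he => hx (by
    rw [he]
    exact le_satur _ _ (Ideal.mem_sup_left (Ideal.mem_span_singleton_self x)))
  have h1 := ih _ hlt (hIU.trans hle) (sat_satur _ _) f
    ((show Ideal.map α U ⊔ Ideal.map β V ≤ _ from sup_le_sup (Ideal.map_mono hle) le_rfl) hf)
  obtain ⟨y, hy, hyf⟩ := exists_good_mul_mem h1
  rw [Ideal.map_sup, Ideal.map_span, Set.image_singleton, sup_assoc,
    Ideal.mem_span_singleton_sup] at hyf
  obtain ⟨g, t, ht, e⟩ := hyf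
  have h2 : α x * (w * g) ∈ Ideal.map α U ⊔ Ideal.map β V := by
    have : α x * (w * g) = α y * (w * f) - w * t := by linear_combination w * e
    rw [this]
    exact sub_mem (Ideal.mul_mem_left _ _ hf) (Ideal.mul_mem_left _ _ ht)
  have h3 := hw P hP _ (h.colon_left V (fun a ha => (hmem a).mpr ha) h2)
  have h4 : α x * g ∈ Ideal.map α U ⊔ Ideal.map β V := by
    obtain ⟨u, hu, v, hv, rfl⟩ := Submodule.mem_sup.mp h3
    rw [mul_add]
    refine add_mem (Ideal.mem_sup_left ?_) (Ideal.mem_sup_right (Ideal.mul_mem_left _ _ hv))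
    have : Ideal.span {α x} * Ideal.map α P ≤ Ideal.map α U := by
      rw [← Set.image_singleton, ← Ideal.map_span, ← Ideal.map_mul]
      refine Ideal.map_mono (Ideal.mul_le.mpr fun r hr s hs => ?_)
      obtain ⟨c, rfl⟩ := Ideal.mem_span_singleton'.mp hr
      rw [mul_assoc]
      exact Ideal.mul_mem_left _ _ ((hmem s).mp hs)
    exact this (Ideal.mul_mem_mul (Ideal.mem_span_singleton_self _) hu)
  refine h.colon_left V (hU y hy) ?_
  rw [← e, mul_comm g]
  exact add_mem h4 ht

/-- Elements outside the minimal primes of `IR + JR` are nonzerodivisors modulo the sum of two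
symbolic powers. -/
lemma TP.mem_symbPow_sup [CharZero k] [Algebra.FiniteType k A] [IsNoetherianRing A]
    [IsNoetherianRing B] (h : TP α β) {I : Ideal A} {J : Ideal B} {w : R}
    (hw : ∀ p ∈ (Ideal.map α I ⊔ Ideal.map β J).minimalPrimes, w ∉ p) {i j : ℕ} {f : R}
    (hf : w * f ∈ Ideal.map α (symbPow I i) ⊔ Ideal.map β (symbPow J j)) :
    f ∈ Ideal.map α (symbPow I i) ⊔ Ideal.map β (symbPow J j) := by
  rw [sup_comm] at hf ⊢
  refine h.symm.filtration (I := J) (n := j) (fun P' hP' g hg => ?_) _ (pow_le_symbPow J j)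
    (sat_symbPow J j) f hf
  rw [sup_comm] at hg ⊢
  exact h.filtration (I := I) (n := i) (fun P hP g hg => h.mem_of_mul_mem hP hP' hw hg) _
    (pow_le_symbPow I i) (sat_symbPow I i) g hg

lemma TP.notMem_left (h : TP α β) {I : Ideal A} {J : Ideal B} {x : A} (hx : x ∈ good I)
    {p : Ideal R} (hp : p ∈ (Ideal.map α I ⊔ Ideal.map β J).minimalPrimes) : α x ∉ p := by
  intro hxp
  have hI : Ideal.map α I.radical ≤ p :=
    (Ideal.map_radical_le α).trans (hp.1.1.radical_le_iff.mpr (le_sup_left.trans hp.1.2))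
  have hJ : Ideal.map β J.radical ≤ p :=
    (Ideal.map_radical_le β).trans (hp.1.1.radical_le_iff.mpr (le_sup_right.trans hp.1.2))
  have hp' : p ∈ (Ideal.map α I.radical ⊔ Ideal.map β J.radical).minimalPrimes :=
    ⟨⟨hp.1.1, sup_le hI hJ⟩, fun q ⟨hq, hLq⟩ hqp => hp.2 ⟨hq, (sup_le_sup
      (Ideal.map_mono Ideal.le_radical) (Ideal.map_mono Ideal.le_radical)).trans hLq⟩ hqp⟩
  obtain ⟨y, hy, hxy⟩ := Ideal.exists_mul_mem_of_mem_minimalPrimes hp' hxp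
  refine hy (h.colon_left _ (fun a ha => ?_) hxy)
  rw [← Ideal.sInf_minimalPrimes, Ideal.mem_sInf] at ha ⊢
  exact fun P hP => (hP.1.1.mem_or_mem (ha hP)).resolve_left (hx P hP)

lemma TP.notMem_right (h : TP α β) {I : Ideal A} {J : Ideal B} {x : B} (hx : x ∈ good J)
    {p : Ideal R} (hp : p ∈ (Ideal.map α I ⊔ Ideal.map β J).minimalPrimes) : β x ∉ p :=
  h.symm.notMem_left hx (by rwa [sup_comm] at hp)

lemma TP.symbPow_left_le [IsNoetherianRing A] (h : TP α β) (I : Ideal A) (J : Ideal B) (i : ℕ) :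
    Ideal.map α (symbPow I i) ≤ symbPow (Ideal.map α I ⊔ Ideal.map β J) i := by
  refine Ideal.map_le_iff_le_comap.mpr fun u hu => mem_symbPow.mpr fun p hp => ?_
  obtain ⟨w, hw, hwu⟩ := exists_forall_notMem_of_mem_symbPow hu
  refine ⟨α w, h.notMem_left hw hp, Ideal.pow_right_mono le_sup_left i ?_⟩
  rw [← Ideal.map_pow]
  change α w * α u ∈ _
  rw [← map_mul]
  exact Ideal.mem_map_of_mem α hwu

lemma TP.symbPow_right_le [IsNoetherianRing B] (h : TP α β) (I : Ideal A) (J : Ideal B) (i : ℕ) :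
    Ideal.map β (symbPow J i) ≤ symbPow (Ideal.map α I ⊔ Ideal.map β J) i := by
  rw [sup_comm]
  exact h.symm.symbPow_left_le J I i

lemma symbPow_mul_le (Q : Ideal R) (i j : ℕ) : symbPow Q i * symbPow Q j ≤ symbPow Q (i + j) := by
  refine Ideal.mul_le.mpr fun f hf g hg => mem_symbPow.mpr fun P hP => ?_
  obtain ⟨s, hs, hsf⟩ := mem_symbPow.mp hf P hP
  obtain ⟨t, ht, htg⟩ := mem_symbPow.mp hg P hP
  refine ⟨s * t, fun h => (hP.1.1.mem_or_mem h).elim hs ht, ?_⟩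
  rw [pow_add, show s * t * (f * g) = s * f * (t * g) by ring]
  exact Ideal.mul_mem_mul hsf htg

lemma sup_pow_le (Q Q' : Ideal R) {i j n : ℕ} (hij : i + j ≤ n + 1) :
    (Q ⊔ Q') ^ n ≤ Q ^ i ⊔ Q' ^ j := by
  rw [← Submodule.add_eq_sup, add_pow]
  refine Finset.sum_induction _ (fun K => K ≤ Q ^ i ⊔ Q' ^ j) (fun _ _ => sup_le) bot_le fun m hm => ?_
  refine Ideal.mul_le_left.trans ?_
  by_cases h : i ≤ m
  · exact Ideal.mul_le_left.trans ((Ideal.pow_le_pow_right h).trans le_sup_left)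
  · exact Ideal.mul_le_right.trans ((Ideal.pow_le_pow_right (by omega)).trans le_sup_right)

/-- The partial sums `∑_{i < t} a_{n-i} b_i`. -/
def partSum (a b : ℕ → Ideal R) (n t : ℕ) : Ideal R := ⨆ i < t, a (n - i) * b i

lemma partSum_succ (a b : ℕ → Ideal R) (n t : ℕ) :
    partSum a b n (t + 1) = partSum a b n t ⊔ a (n - t) * b t := by
  rw [partSum, partSum, Nat.iSup_lt_succ]

lemma partSum_le {a : ℕ → Ideal R} (ha : Antitone a) (b : ℕ → Ideal R) {n t m : ℕ}
    (h : m + t ≤ n + 1) : partSum a b n t ≤ a m :=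
  iSup₂_le fun _ _ => Ideal.mul_le_left.trans (ha (by omega))

lemma mem_partSum_sup {a b : ℕ → Ideal R} (ha : Antitone a) (hb : Antitone b) (hb0 : b 0 = ⊤)
    (hab : ∀ i j, a i ⊓ b j = a i * b j) {n : ℕ} {f : R} (t : ℕ) (ht : t ≤ n + 1)
    (hf : ∀ j < t, f ∈ a (n - j) ⊔ b (j + 1)) : f ∈ partSum a b n t ⊔ b t := by
  induction t with
  | zero => simp [hb0]
  | succ t ih =>
    obtain ⟨p, hp, v, hv, rfl⟩ := Submodule.mem_sup.mp
      (ih (by omega) (fun j hj => hf j (by omega)))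
    have h1 : v ∈ a (n - t) ⊔ b (t + 1) := by
      have := sub_mem (hf t (by omega))
        (Ideal.mem_sup_left (partSum_le ha b (by omega) hp) : p ∈ a (n - t) ⊔ b (t + 1))
      simpa using this
    obtain ⟨x, hx, y, hy, rfl⟩ := Submodule.mem_sup.mp h1
    have hxb : x ∈ b t := by
      have := sub_mem hv (hb (Nat.le_succ t) hy)
      simpa using this
    rw [partSum_succ, ← add_assoc, ← hab]
    exact add_mem (Ideal.mem_sup_left (add_mem (Ideal.mem_sup_left hp)
      (Ideal.mem_sup_right ⟨hx, hxb⟩))) (Ideal.mem_sup_right hy)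

/-- The binomial theorem for symbolic powers:
`(I + J)^{(n)} = ∑_{i = 0}^n I^{(n-i)} J^{(i)}`. -/
theorem TP.symbPow_sup [CharZero k] [Algebra.FiniteType k A] [IsNoetherianRing A]
    [IsNoetherianRing B] [IsNoetherianRing R] (h : TP α β) (I : Ideal A) (J : Ideal B) (n : ℕ) :
    symbPow (Ideal.map α I ⊔ Ideal.map β J) n =
      partSum (fun i => Ideal.map α (symbPow I i)) (fun j => Ideal.map β (symbPow J j)) n (n + 1) := by
  apply le_antisymm
  · intro f hf
    obtain ⟨w, hw, hwf⟩ := exists_forall_notMem_of_mem_symbPow hf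
    have := mem_partSum_sup (a := fun i => Ideal.map α (symbPow I i))
      (b := fun j => Ideal.map β (symbPow J j)) (n := n) (f := f)
      (fun i j hij => Ideal.map_mono (symbPow_anti I hij))
      (fun i j hij => Ideal.map_mono (symbPow_anti J hij))
      (by simp [symbPow_zero, Ideal.map_top]) (fun i j => h.inf_eq_mul _ _) (n + 1) le_rfl ?_
    · rwa [sup_eq_left.mpr] at this
      rw [partSum_succ]
      refine le_trans ?_ le_sup_right
      simp only [Nat.sub_self, symbPow_zero, Ideal.map_top, Ideal.top_mul]
      exact Ideal.map_mono (symbPow_anti J (Nat.le_succ n))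
    · intro j hj
      refine h.mem_symbPow_sup hw ?_
      have h1 := sup_pow_le _ _ (i := n - j) (j := j + 1) (by omega) hwf
      rw [← Ideal.map_pow, ← Ideal.map_pow] at h1
      have h2 : Ideal.map α (I ^ (n - j)) ⊔ Ideal.map β (J ^ (j + 1)) ≤ _ :=
        sup_le_sup (Ideal.map_mono (pow_le_symbPow _ _)) (Ideal.map_mono (pow_le_symbPow _ _))
      exact h2 h1
  · refine iSup₂_le fun i hi => (Ideal.mul_mono (h.symbPow_left_le I J _)
      (h.symbPow_right_le I J _)).trans ((symbPow_mul_le _ _ _).trans ?_)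
    rw [Nat.sub_add_cancel (by omega)]

end Binomial

/-! ### The depth formula -/

section Assembly

variable {k : Type*} [Field k] [CharZero k]

omit [CharZero k] in
lemma euler_rename {σ ι : Type*} [Fintype σ] (ρ : σ ↪ ι) (a : MvPolynomial σ k) :
    euler (Finset.univ.map ρ) (rename ρ a) = rename ρ (euler Finset.univ a) := by
  simp [euler_apply, map_sum, pderiv_rename ρ.injective]

omit [CharZero k] in
lemma pderiv_rename_eq_zero {τ ι : Type*} (ρ : τ → ι) {i : ι} (hi : i ∉ Set.range ρ)
    (b : MvPolynomial τ k) : pderiv i (rename ρ b) = 0 := by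
  classical
  refine pderiv_eq_zero_of_notMem_vars fun h => hi ?_
  obtain ⟨j, -, hj⟩ := Finset.mem_image.mp (vars_rename ρ b h)
  exact ⟨j, hj⟩

/-- The inclusion `I^{(i+1)} V → I^{(i)} V`, with `V` in other variables, induces zero in Koszul
homology: the derivations in the variables of `I` map `I^{(i+1)}` to `I^{(i)}`. -/
lemma HZero_symbPow_mul {σ τ ι : Type*} [LinearOrder ι] [Fintype ι] [Fintype σ] (ρ : σ ↪ ι)
    (ρ' : τ → ι) (hρ : ∀ i, ρ i ∉ Set.range ρ') {I : Ideal (MvPolynomial σ k)}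
    (hI : IsHomogeneousIdeal I) (hI1 : I ≠ ⊤) (V : Ideal (MvPolynomial τ k)) (i p : ℕ) :
    HZero (Ideal.map (rename ρ : MvPolynomial σ k →ₐ[k] MvPolynomial ι k) (symbPow I (i + 1)) *
        Ideal.map (rename ρ' : MvPolynomial τ k →ₐ[k] MvPolynomial ι k) V)
      (Ideal.map (rename ρ : MvPolynomial σ k →ₐ[k] MvPolynomial ι k) (symbPow I i) *
        Ideal.map (rename ρ' : MvPolynomial τ k →ₐ[k] MvPolynomial ι k) V) p := by
  classical
  intro z hz hzQ hz0
  have hanti := symbPow_anti I (Nat.le_succ i)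
  refine deRham_exact (Finset.univ.map ρ) (fun f hf => ?_) (fun j hj f hf => ?_) hz hzQ hz0
    fun s a ha => ?_
  · refine deriv_mul_mem (euler _) (deriv_map_mem _ _ le_rfl fun a ha => ?_)
      (deriv_map_mem _ _ le_rfl fun b _ => ?_) le_rfl le_rfl hf
    · rw [euler_rename]
      exact Ideal.mem_map_of_mem _
        (deriv_symbPow_mem _ le_rfl (deriv_pow_mem _ (euler_mem hI) _) a ha)
    · rw [euler_apply, Finset.sum_eq_zero]
      · exact zero_mem _
      · intro j hj
        obtain ⟨j, -, rfl⟩ := Finset.mem_map.mp hj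
        rw [pderiv_rename_eq_zero ρ' (hρ j), mul_zero]
  · obtain ⟨j, -, rfl⟩ := Finset.mem_map.mp hj
    refine deriv_mul_mem (pderiv (ρ j)) (deriv_map_mem _ _ hanti fun a ha => ?_)
      (deriv_map_mem _ _ le_rfl fun b _ => ?_) (Ideal.mul_mono_left (Ideal.map_mono hanti)) le_rfl hf
    · rw [pderiv_rename ρ.injective]
      exact Ideal.mem_map_of_mem _
        (deriv_symbPow_mem _ (Nat.le_succ i) (deriv_pow_succ_mem _ _ _) a ha)
    · rw [pderiv_rename_eq_zero ρ' (hρ j)]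
      exact zero_mem _
  · have : (maxHomIdeal k σ).IsPrime := by
      let _ : LinearOrder σ := IsWellOrder.linearOrder (WellOrderingRel (α := σ))
      exact isMaximal_maxHomIdeal.isPrime
    have h1 : z s ∈ Ideal.span (X '' (Set.range ρ) : Set (MvPolynomial ι k)) := by
      have h2 : Ideal.map (rename ρ : MvPolynomial σ k →ₐ[k] MvPolynomial ι k)
          (symbPow I (i + 1)) ≤ _ :=
        Ideal.map_mono (symbPow_le_of_le (le_maxHomIdeal hI hI1) (Nat.succ_pos i))
      have h3 := h2 (Ideal.mul_le_left (hzQ s))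
      rw [maxHomIdeal, Ideal.map_span, ← Set.range_comp] at h3
      rw [← Set.range_comp]
      convert h3 using 3
      ext i
      simp
    rw [mem_ideal_span_X_image] at h1
    obtain ⟨_, ⟨j, rfl⟩, hj⟩ := h1 a (mem_support_iff.mpr ha)
    intro h2
    exact hj (Finset.sum_eq_zero_iff.mp (Nat.eq_zero_of_add_eq_zero_right h2) _
      (Finset.mem_map_of_mem ρ (Finset.mem_univ j)))

/-- The projective dimension of `∑_{i ≤ t} a_{n-i} b_i`, computed by adding one summand at a
time; it is the maximum of the projective dimensions `f i j` of the summands `a_i b_j` and of one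
plus those of the successive intersections. -/
lemma exists_PD_partSum {ι : Type*} [LinearOrder ι] [Fintype ι]
    {a b : ℕ → Ideal (MvPolynomial ι k)} (ha : Antitone a) (hb : Antitone b)
    (hab : ∀ i j, a i ⊓ b j = a i * b j) (za : ∀ i j p, HZero (a (i + 1) * b j) (a i * b j) p)
    (zb : ∀ i j p, HZero (a i * b (j + 1)) (a i * b j) p) {f : ℕ → ℕ → ℕ}
    (hf : ∀ i j, 1 ≤ i + j → PD (a i * b j) (f i j)) {n : ℕ} (hn : 1 ≤ n) (t : ℕ) (ht : t ≤ n) :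
    ∃ g, PD (partSum a b n (t + 1)) g ∧
      (∀ s, 1 ≤ s → s ≤ t → f (n - s) s ≤ g ∧ f (n - s + 1) s + 1 ≤ g) ∧
      (g = f n 0 ∨ ∃ s, 1 ≤ s ∧ s ≤ t ∧ (g = f (n - s) s ∨ g = f (n - s + 1) s + 1)) := by
  induction t with
  | zero =>
    refine ⟨f n 0, ?_, fun s h1 h2 => by omega, .inl rfl⟩
    rw [partSum_succ]
    have : partSum a b n 0 = ⊥ := by simp [partSum]
    rw [this, bot_sup_eq]
    exact hf n 0 (by omega)
  | succ t ih =>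
    obtain ⟨g, hg, hg1, hg2⟩ := ih (by omega)
    have hinf : partSum a b n (t + 1) ⊓ a (n - (t + 1)) * b (t + 1) =
        a (n - (t + 1) + 1) * b (t + 1) := by
      apply le_antisymm
      · rw [← hab (n - (t + 1) + 1)]
        exact inf_le_inf (partSum_le ha b (by omega)) Ideal.mul_le_right
      · refine le_inf ?_ (Ideal.mul_mono_left (ha (Nat.le_succ _)))
        rw [partSum_succ, show n - (t + 1) + 1 = n - t by omega]
        exact (Ideal.mul_mono_right (hb (Nat.le_succ t))).trans le_sup_right
    have key := hg.sup (hf (n - (t + 1)) (t + 1) (by omega))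
      (d := f (n - (t + 1) + 1) (t + 1)) (by rw [hinf]; exact hf _ _ (by omega))
      (fun p => by
        rw [hinf]
        refine (zb _ t p).mono ?_
        rw [partSum_succ, show n - (t + 1) + 1 = n - t by omega]
        exact le_sup_right)
      (fun p => by rw [hinf]; exact za _ _ p)
    rw [partSum_succ _ _ _ (t + 1)]
    refine ⟨_, key, fun s h1 h2 => ?_, ?_⟩
    · rcases Nat.lt_or_ge t s with h | h
      · obtain rfl : s = t + 1 := by omega
        exact ⟨by simp, by simp⟩
      · have := hg1 s h1 h
        exact ⟨this.1.trans (le_max_left _ _), this.2.trans (le_max_left _ _)⟩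
    · rcases max_choice g (max (f (n - (t + 1)) (t + 1)) (f (n - (t + 1) + 1) (t + 1) + 1))
        with e | e
      · rw [e]
        rcases hg2 with h | ⟨s, h1, h2, h⟩
        · exact .inl h
        · exact .inr ⟨s, h1, by omega, h⟩
      · rw [e]
        refine .inr ⟨t + 1, by omega, le_rfl, ?_⟩
        exact max_choice _ _

/-- The depth formula, expressed through projective dimensions. -/
lemma exists_PD_symbPow_sup {σ τ : Type*} [Fintype σ] [Fintype τ] [LinearOrder σ] [LinearOrder τ]
    [LinearOrder (σ ⊕ τ)] {I : Ideal (MvPolynomial σ k)} {J : Ideal (MvPolynomial τ k)}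
    (hI0 : I ≠ ⊥) (hI1 : I ≠ ⊤) (hI : IsHomogeneousIdeal I) (hJ0 : J ≠ ⊥) (hJ1 : J ≠ ⊤)
    (hJ : IsHomogeneousIdeal J) {u v : ℕ → ℕ} (hu0 : u 0 = 0) (hv0 : v 0 = 0)
    (hu : ∀ i, 1 ≤ i → PD (symbPow I i) (u i)) (hv : ∀ j, 1 ≤ j → PD (symbPow J j) (v j))
    {n : ℕ} (hn : 1 ≤ n) :
    ∃ g, PD (symbPow (Ideal.map (incl k σ τ) I ⊔ Ideal.map (incr k σ τ) J) n) g ∧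
      (∀ s, 1 ≤ s → s ≤ n → u (n - s) + v s ≤ g ∧ u (n - s + 1) + v s + 1 ≤ g) ∧
      (g = u n + v 0 ∨ ∃ s, 1 ≤ s ∧ s ≤ n ∧
        (g = u (n - s) + v s ∨ g = u (n - s + 1) + v s + 1)) := by
  rw [tp.symbPow_sup]
  have hIm : ∀ i, 1 ≤ i → symbPow I i ≤ maxHomIdeal k σ := fun i hi => by
    have := (isMaximal_maxHomIdeal (k := k) (ι := σ)).isPrime
    exact symbPow_le_of_le (le_maxHomIdeal hI hI1) hi
  have hJm : ∀ i, 1 ≤ i → symbPow J i ≤ maxHomIdeal k τ := fun i hi => by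
    have := (isMaximal_maxHomIdeal (k := k) (ι := τ)).isPrime
    exact symbPow_le_of_le (le_maxHomIdeal hJ hJ1) hi
  refine exists_PD_partSum (f := fun i j => u i + v j)
    (fun i j hij => Ideal.map_mono (symbPow_anti I hij))
    (fun i j hij => Ideal.map_mono (symbPow_anti J hij)) (fun i j => tp.inf_eq_mul _ _)
    (fun i j p => HZero_symbPow_mul ⟨Sum.inl, Sum.inl_injective⟩ Sum.inr (by simp) hI hI1 _ i p)
    (fun i j p => ?_) (fun i j hij => ?_) hn n le_rfl
  · rw [mul_comm, mul_comm (Ideal.map _ (symbPow I i))]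
    exact HZero_symbPow_mul ⟨Sum.inr, Sum.inr_injective⟩ Sum.inl (by simp) hJ hJ1 _ j p
  · rcases Nat.eq_zero_or_pos i with rfl | hi
    · rw [symbPow_zero, Ideal.map_top, Ideal.top_mul, hu0, zero_add]
      exact (hv j (by omega)).incr (hJm j (by omega)) (symbPow_ne_bot hJ0 j)
    rcases Nat.eq_zero_or_pos j with rfl | hj
    · rw [symbPow_zero, Ideal.map_top, Ideal.mul_top, hv0, add_zero]
      exact (hu i hi).incl (hIm i hi) (symbPow_ne_bot hI0 i)
    rw [← tp.inf_eq_mul]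
    exact PD.incl_inf_incr (hIm i hi) (hJm j hj) (symbPow_ne_bot hI0 i) (symbPow_ne_bot hJ0 j)
      (hu i hi) (hv j hj)

end Assembly

/-- **Theorem 5.5(i)**: in characteristic zero, for nonzero proper homogeneous ideals
`I ⊆ A = k[X]`, `J ⊆ B = k[Y]` and `R = k[X,Y]`, for all `n ≥ 1`,
`depth R/(I+J)^{(n)} = min_{i ∈ [1,n-1], j ∈ [1,n]} { depth A/I^{(n-i)} + depth B/J^{(i)} + 1,
 depth A/I^{(n-j+1)} + depth B/J^{(j)} }`. -/
theorem depth_symbPow_sum_eq_of_charZero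
    {k : Type} [Field k] [CharZero k] {σ τ : Type} [Fintype σ] [Fintype τ]
    (I : Ideal (MvPolynomial σ k)) (J : Ideal (MvPolynomial τ k))
    (hIbot : I ≠ ⊥) (hItop : I ≠ ⊤) (hIhom : IsHomogeneousIdeal I)
    (hJbot : J ≠ ⊥) (hJtop : J ≠ ⊤) (hJhom : IsHomogeneousIdeal J)
    (IR JR : Ideal (MvPolynomial (σ ⊕ τ) k))
    (hIR : IR = Ideal.map (rename Sum.inl : MvPolynomial σ k →ₐ[k] MvPolynomial (σ ⊕ τ) k) I)
    (hJR : JR = Ideal.map (rename Sum.inr : MvPolynomial τ k →ₐ[k] MvPolynomial (σ ⊕ τ) k) J)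
    (n : ℕ) (hn : 1 ≤ n) :
    idealDepth (maxHomIdeal k (σ ⊕ τ)) (MvPolynomial (σ ⊕ τ) k ⧸ symbPow (IR + JR) n) =
    sInf ({d | ∃ i, 1 ≤ i ∧ i ≤ n - 1 ∧
            d = idealDepth (maxHomIdeal k σ) (MvPolynomial σ k ⧸ symbPow I (n - i)) +
                idealDepth (maxHomIdeal k τ) (MvPolynomial τ k ⧸ symbPow J i) + 1} ∪
          {d | ∃ j, 1 ≤ j ∧ j ≤ n ∧
            d = idealDepth (maxHomIdeal k σ) (MvPolynomial σ k ⧸ symbPow I (n - j + 1)) +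
                idealDepth (maxHomIdeal k τ) (MvPolynomial τ k ⧸ symbPow J j)}) := by
  -- The Koszul complex needs an order on the variables; any one will do.
  let _ : LinearOrder σ := IsWellOrder.linearOrder (WellOrderingRel (α := σ))
  let _ : LinearOrder τ := IsWellOrder.linearOrder (WellOrderingRel (α := τ))
  let _ : LinearOrder (σ ⊕ τ) := IsWellOrder.linearOrder (WellOrderingRel (α := σ ⊕ τ))
  have hmσ := (isMaximal_maxHomIdeal (k := k) (ι := σ)).isPrime
  have hmτ := (isMaximal_maxHomIdeal (k := k) (ι := τ)).isPrime
  have hmR := (isMaximal_maxHomIdeal (k := k) (ι := σ ⊕ τ)).isPrime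
  have hIm := le_maxHomIdeal hIhom hItop
  have hJm := le_maxHomIdeal hJhom hJtop
  have hu : ∀ i, ∃ u, (i = 0 → u = 0) ∧ (1 ≤ i → PD (symbPow I i) u) := fun i => by
    rcases Nat.eq_zero_or_pos i with rfl | hi
    · exact ⟨0, by simp, by simp⟩
    · obtain ⟨u, hu⟩ := exists_PD (symbPow_ne_bot hIbot i) (symbPow_le_of_le hIm hi)
      exact ⟨u, by omega, fun _ => hu⟩
  have hv : ∀ i, ∃ u, (i = 0 → u = 0) ∧ (1 ≤ i → PD (symbPow J i) u) := fun i => by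
    rcases Nat.eq_zero_or_pos i with rfl | hi
    · exact ⟨0, by simp, by simp⟩
    · obtain ⟨u, hu⟩ := exists_PD (symbPow_ne_bot hJbot i) (symbPow_le_of_le hJm hi)
      exact ⟨u, by omega, fun _ => hu⟩
  choose u hu0 hu using hu
  choose v hv0 hv using hv
  obtain ⟨g, hg, hg1, hg2⟩ := exists_PD_symbPow_sup hIbot hItop hIhom hJbot hJtop hJhom
    (hu0 0 rfl) (hv0 0 rfl) hu hv hn
  have hD := fun i (hi : 1 ≤ i) => (hu i hi).add_depth (symbPow_le_of_le hIm hi)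
  have hE := fun i (hi : 1 ≤ i) => (hv i hi).add_depth (symbPow_le_of_le hJm hi)
  rw [show IR + JR = Ideal.map (incl k σ τ) I ⊔ Ideal.map (incr k σ τ) J by rw [hIR, hJR]; rfl]
  have hR := hg.add_depth (symbPow_le_of_le (sup_le (map_incl_le hIm) (map_incr_le hJm)) hn)
  rw [Fintype.card_sum] at hR
  symm
  refine IsLeast.csInf_eq ⟨?_, ?_⟩
  · -- The extreme terms `s = 0` and `s = n` of the first kind are dominated by terms of the
    -- second kind.
    have hfirst := (hg1 1 le_rfl hn).2
    have hlast := (hg1 n hn le_rfl).2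
    rw [Nat.sub_add_cancel hn] at hfirst
    have h00 := hu0 0 rfl
    have h01 := hv0 0 rfl
    rcases hg2 with h | ⟨s, h1, h2, h | h⟩
    · omega
    · obtain rfl | hs := h2.eq_or_lt
      · simp only [Nat.sub_self] at h hlast
        omega
      · refine .inl ⟨s, h1, by omega, ?_⟩
        have := hD (n - s) (by omega)
        have := hE s h1
        omega
    · refine .inr ⟨s, h1, h2, ?_⟩
      have := hD (n - s + 1) (by omega)
      have := hE s h1
      omega
  · rintro d (⟨s, h1, h2, rfl⟩ | ⟨s, h1, h2, rfl⟩)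
    · have := (hg1 s h1 (by omega)).1
      have := hD (n - s) (by omega)
      have := hE s h1
      omega
    · have := (hg1 s h1 h2).2
      have := hD (n - s + 1) (by omega)
      have := hE s h1
      omega
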